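/- arXiv:2207.14609 — 5 statements merged into one kernel-verified Lean document; each statement's English description precedes it below -/
import Mathlib

section
/- The function classes Σ_n and Y_n coincide: every f₂ ∈ Y_n can be written in the form f₂(t) = q₁·t + q₀ + Σ_{k=1}^{N} α_k·σ(t − x_k) for all t ∈ ℝ with some N ≤ n, real coefficients q₀, q₁, α₁, …, α_N and strictly ordered knots x₁ < … < x_N; and conversely every s ∈ Σ_n belongs to Y_n. -/
/-- The ReLU function `σ(x) = max(x,0)`. -/
noncomputable def relu (x : ℝ) : ℝ := max x 0

/-- `f` belongs to the shallow ReLU network class `Y_n`. -/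
def IsShallowReLU (n : ℕ) (f : ℝ → ℝ) : Prop :=
  ∃ (a1 a2 b1 : Fin n → ℝ) (c b : ℝ),
    ∀ t, f t = c * t + b + ∑ j, a2 j * relu (a1 j * t + b1 j)

/-- `f` belongs to the CPL spline class `Σ_N` (with exactly `N` strictly ordered knots,
coefficients possibly zero). -/
def IsCPLSpline (N : ℕ) (f : ℝ → ℝ) : Prop :=
  ∃ (q0 q1 : ℝ) (α x : Fin N → ℝ), StrictMono x ∧
    ∀ t, f t = q1 * t + q0 + ∑ k, α k * relu (t - x k)

/-! For every `a` one has `σ(a·v) = |a|·σ(v) + min(a, 0)·v`, so a neuron with nonzero inner weight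
is, up to an affine function, a multiple of `σ(t - x)` with `x` the zero of its argument; a neuron
with zero inner weight is constant. The resulting knots may be unordered and may coincide, so they
are embedded in a strictly increasing family of `n` knots, on which the coefficients of coinciding
knots are added up and the superfluous knots receive the coefficient `0`. -/

theorem exists_strictMono_comp_eq {ι κ : Type*} [Fintype ι] [LinearOrder κ] [Infinite κ] {n : ℕ}
    (hn : Fintype.card ι ≤ n) (x : ι → κ) :
    ∃ (y : Fin n → κ) (e : ι → Fin n), StrictMono y ∧ y ∘ e = x := by
  obtain ⟨S, hxS, hS⟩ := Infinite.exists_superset_card_eq (Finset.univ.image x) n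
    (Finset.card_image_le.trans hn)
  have hrange : Set.range x ⊆ Set.range (S.orderEmbOfFin hS) := by
    rw [Finset.range_orderEmbOfFin]
    rintro _ ⟨j, rfl⟩
    exact hxS (Finset.mem_image_of_mem x (Finset.mem_univ j))
  obtain ⟨e, he⟩ := Set.range_subset_range_iff_exists_comp.mp hrange
  exact ⟨S.orderEmbOfFin hS, e, (S.orderEmbOfFin hS).strictMono, he.symm⟩

theorem sum_sum_fiber_smul {ι κ R M : Type*} [Fintype ι] [Fintype κ] [DecidableEq κ] [Semiring R]
    [AddCommMonoid M] [Module R M] (e : ι → κ) (γ : ι → R) (φ : κ → M) :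
    ∑ k, (∑ j with e j = k, γ j) • φ k = ∑ j, γ j • φ (e j) := by
  rw [← Finset.sum_fiberwise Finset.univ e]
  refine Finset.sum_congr rfl fun k _ => ?_
  rw [Finset.sum_smul]
  refine Finset.sum_congr rfl fun j hj => ?_
  rw [(Finset.mem_filter.mp hj).2]

theorem isCPLSpline_sum_relu {ι : Type*} [Fintype ι] {n : ℕ} (hn : Fintype.card ι ≤ n)
    (q0 q1 : ℝ) (γ x : ι → ℝ) :
    IsCPLSpline n fun t => q1 * t + q0 + ∑ j, γ j * relu (t - x j) := by
  obtain ⟨y, e, hy, rfl⟩ := exists_strictMono_comp_eq hn x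
  exact ⟨q0, q1, fun k => ∑ j with e j = k, γ j, y, hy, fun t =>
    congrArg (q1 * t + q0 + ·) (sum_sum_fiber_smul e γ fun k => relu (t - y k)).symm⟩

theorem relu_mul (a v : ℝ) : relu (a * v) = |a| * relu v + min a 0 * v := by
  unfold relu
  rcases le_total 0 a with ha | ha
  · rw [abs_of_nonneg ha, min_eq_right ha, mul_max_of_nonneg _ _ ha, mul_zero, zero_mul, add_zero]
  · rw [abs_of_nonpos ha, min_eq_left ha]
    calc max (a * v) 0 = max (-a * v + a * v) (-a * 0 + a * v) := by
          rw [neg_mul, neg_add_cancel, mul_zero, zero_add, max_comm]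
      _ = -a * max v 0 + a * v := by
          rw [← max_add, ← mul_max_of_nonneg _ _ (neg_nonneg.mpr ha)]

theorem exists_relu_affine_eq (a b : ℝ) :
    ∃ p q γ x : ℝ, ∀ t, relu (a * t + b) = p * t + q + γ * relu (t - x) := by
  rcases eq_or_ne a 0 with rfl | ha
  · exact ⟨0, relu b, 0, 0, fun t => by simp only [zero_mul, zero_add, add_zero]⟩
  · refine ⟨min a 0, min a 0 * (b / a), |a|, -(b / a), fun t => ?_⟩
    calc relu (a * t + b) = relu (a * (t - -(b / a))) := by
          rw [sub_neg_eq_add, mul_add, mul_div_cancel₀ b ha]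
      _ = |a| * relu (t - -(b / a)) + min a 0 * (t - -(b / a)) := relu_mul _ _
      _ = min a 0 * t + min a 0 * (b / a) + |a| * relu (t - -(b / a)) := by ring

theorem IsShallowReLU.isCPLSpline {n : ℕ} {f : ℝ → ℝ} (hf : IsShallowReLU n f) :
    IsCPLSpline n f := by
  obtain ⟨a1, a2, b1, c, b, hf⟩ := hf
  choose p q γ x hneuron using fun j => exists_relu_affine_eq (a1 j) (b1 j)
  have hspline : f = fun t => (c + ∑ j, a2 j * p j) * t + (b + ∑ j, a2 j * q j) +
      ∑ j, a2 j * γ j * relu (t - x j) := by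
    funext t
    simp only [hf t, hneuron, mul_add, ← mul_assoc, Finset.sum_add_distrib, ← Finset.sum_mul]
    ring
  rw [hspline]
  exact isCPLSpline_sum_relu (Fintype.card_fin n).le _ _ _ _

theorem IsCPLSpline.isShallowReLU {n : ℕ} {s : ℝ → ℝ} (hs : IsCPLSpline n s) :
    IsShallowReLU n s := by
  obtain ⟨q0, q1, α, x, -, hs⟩ := hs
  exact ⟨fun _ => 1, α, fun k => -x k, q1, q0, fun t => by
    simp only [hs t, one_mul, sub_eq_add_neg]⟩

theorem shallow_relu_eq_spline_general (n : ℕ) (f : ℝ → ℝ) :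
    IsShallowReLU n f ↔ IsCPLSpline n f :=
  ⟨IsShallowReLU.isCPLSpline, IsCPLSpline.isShallowReLU⟩

/-- the classes `Σ_n` and `Y_n` coincide. -/
theorem shallow_relu_eq_spline (n : ℕ) :
    (∀ f : ℝ → ℝ, IsShallowReLU n f → ∃ N, N ≤ n ∧ IsCPLSpline N f) ∧
    (∀ s : ℝ → ℝ, IsCPLSpline n s → IsShallowReLU n s) := by
  exact ⟨fun f hf => ⟨n, le_rfl, (shallow_relu_eq_spline_general n f).mp hf⟩,
    fun s => (shallow_relu_eq_spline_general n s).mpr⟩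
end

section
/- Let f(t) = c·t + b + Σ_{k=1}^{n} α_k·σ(t − x_k) with strictly ordered knots x₁ < … < x_n, and set x₀ := −∞, x_{n+1} := +∞, μ_k := c + Σ_{ℓ=1}^{k} α_ℓ and η_k := b − Σ_{ℓ=1}^{k} α_ℓ·x_ℓ for k = 0, …, n (so μ₀ = c, η₀ = b). Then for all t ∈ ℝ, σ(f(t)) = c̃·t + b̃ + Σ_{k=1}^{n} α̃_k·σ(t − x_k) + Σ_{ν ∈ S} |μ_ν|·σ(t + η_ν/μ_ν), where S := { ν ∈ {0, …, n} : μ_ν ≠ 0 and −η_ν/μ_ν ∈ (x_ν, x_{ν+1}) }, c̃ = −σ(−c), b̃ = b if c < 0, b̃ = σ(b) if c = 0, b̃ = 0 if c > 0, and α̃_k = α_k if f(x_k) > 0, α̃_k = σ(μ_k) + σ(−μ_{k−1}) if f(x_k) = 0, α̃_k = 0 if f(x_k) < 0. In particular, σ∘f is a CPL spline function with at most 2n + 1 knots. -/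
/-!
Truncate the spline to its first `k` knots and let `k` grow. Right of the knot `p = x_k` the
truncations before and after adding `p` are affine with the same value at `p`, and `σ ∘ g` for an
affine `g` is, on `[p, ∞)`, a one-sided tangent at `p` plus at most one kink, at the zero of `g`.
Hence adding `p` changes the slope of `σ ∘ f` at `p` from the left slope before to the right slope
after (their difference is `α̃_k`), and replaces the kink of the old segment beyond `p` by that of
the new one. Summing over `k` telescopes.
-/

lemma relu_of_nonneg {s : ℝ} (h : 0 ≤ s) : relu s = s := max_eq_left h

lemma relu_of_nonpos {s : ℝ} (h : s ≤ 0) : relu s = 0 := max_eq_right h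

lemma relu_zero : relu 0 = 0 := relu_of_nonneg le_rfl

lemma relu_sub_relu_neg (m : ℝ) : relu m - relu (-m) = m := posPart_sub_negPart m

lemma relu_add_relu_neg (m : ℝ) : relu m + relu (-m) = |m| := posPart_add_negPart m

lemma relu_mul_s2 (m s : ℝ) : relu (m * s) = -relu (-m) * s + |m| * relu s := by
  rcases le_total 0 m with hm | hm
  · rw [relu_of_nonpos (neg_nonpos.2 hm), abs_of_nonneg hm, relu, relu,
      mul_max_of_nonneg _ _ hm]
    ring_nf
  · have hneg : relu (m * s) = -m * relu (-s) := by
      rw [relu, relu, mul_max_of_nonneg _ _ (neg_nonneg.2 hm)]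
      ring_nf
    rw [hneg, relu_of_nonneg (neg_nonneg.2 hm), abs_of_nonpos hm]
    linear_combination m * relu_sub_relu_neg s

/-- The slope to the right of a point where `g` has value `v` of `σ ∘ g`, for `g` affine with
slope `m`. -/
noncomputable def reluRightSlope (v m : ℝ) : ℝ :=
  if 0 < v then m else if v = 0 then relu m else 0

/-- The slope to the left of a point where `g` has value `v` of `σ ∘ g`, for `g` affine with
slope `m`. -/
noncomputable def reluLeftSlope (v m : ℝ) : ℝ :=
  if 0 < v then m else if v = 0 then -relu (-m) else 0

/-- The contribution to `σ ∘ g` of the zero `-(e / m)` of the affine function `g t = m * t + e`.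
It vanishes for `m = 0`, where `g` has no isolated zero and `-(e / m)` is the junk value `0`. -/
noncomputable def reluKink (m e t : ℝ) : ℝ := |m| * relu (t + e / m)

lemma reluKink_zero_left (e t : ℝ) : reluKink 0 e t = 0 := by
  rw [reluKink, abs_zero, zero_mul]

lemma reluKink_of_le {m e t : ℝ} (h : t ≤ -(e / m)) : reluKink m e t = 0 := by
  rw [reluKink, relu_of_nonpos (by linarith), mul_zero]

lemma reluRightSlope_sub_reluLeftSlope (v m m' : ℝ) :
    reluRightSlope v m' - reluLeftSlope v m =
      if 0 < v then m' - m else if v = 0 then relu m' + relu (-m) else 0 := by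
  unfold reluRightSlope reluLeftSlope
  split_ifs <;> ring

lemma reluRightSlope_mul (m s : ℝ) :
    reluRightSlope (m * s) m = if s < 0 then -relu (-m) else relu m := by
  rw [reluRightSlope]
  rcases lt_trichotomy m 0 with hm | rfl | hm
  · rw [relu_of_nonneg (neg_nonneg.2 hm.le), relu_of_nonpos hm.le, neg_neg, ite_self]
    have hpos : 0 < m * s ↔ s < 0 := smul_pos_iff_of_neg_left hm
    simp only [hpos]
  · simp only [relu_zero, neg_zero, ite_self]
  · rw [relu_of_nonpos (neg_nonpos.2 hm.le), relu_of_nonneg hm.le, neg_zero]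
    simp only [mul_pos_iff_of_pos_left hm, mul_eq_zero, hm.ne', false_or]
    grind

lemma reluRightSlope_zero_right (v : ℝ) : reluRightSlope v 0 = 0 := by
  simp only [reluRightSlope, relu_zero, ite_self]

lemma reluRightSlope_eq_reluLeftSlope_add (v m : ℝ) :
    reluRightSlope v m = reluLeftSlope v m + if v = 0 then |m| else 0 := by
  rw [← sub_eq_iff_eq_add', reluRightSlope_sub_reluLeftSlope, relu_add_relu_neg, sub_self]
  exact ite_eq_right_iff.2 fun hv ↦ (if_neg hv.ne').symm

lemma mul_add_eq_mul_add_div {K : Type*} [Field K] {m : K} (hm : m ≠ 0) (e t : K) :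
    m * t + e = m * (t + e / m) := by
  field_simp

lemma relu_affine_eq_right_tangent_add_kink (m e : ℝ) {p t : ℝ} (hpt : p ≤ t) :
    relu (m * t + e) = relu (m * p + e) + reluRightSlope (m * p + e) m * (t - p) +
      if p < -(e / m) then reluKink m e t else 0 := by
  obtain rfl | hm := eq_or_ne m 0
  · simp only [zero_mul, zero_add, reluRightSlope_zero_right, reluKink_zero_left, ite_self,
      add_zero]
  rw [mul_add_eq_mul_add_div hm, mul_add_eq_mul_add_div hm, reluRightSlope_mul, relu_mul_s2,
    relu_mul_s2, reluKink]
  rcases lt_or_ge p (-(e / m)) with h | h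
  · rw [if_pos h, if_pos (by linarith), relu_of_nonpos (by linarith : p + e / m ≤ 0)]
    ring
  · rw [if_neg h.not_gt, if_neg (by linarith), relu_of_nonneg (by linarith : 0 ≤ p + e / m),
      relu_of_nonneg (by linarith : 0 ≤ t + e / m), ← relu_add_relu_neg]
    ring

-- A kink at `p` itself accounts for the difference of the two one-sided slopes there.
lemma relu_affine_eq_left_tangent_add_kink (m e : ℝ) {p t : ℝ} (hpt : p ≤ t) :
    relu (m * t + e) = relu (m * p + e) + reluLeftSlope (m * p + e) m * (t - p) +
      if p ≤ -(e / m) then reluKink m e t else 0 := by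
  rw [relu_affine_eq_right_tangent_add_kink m e hpt, reluRightSlope_eq_reluLeftSlope_add]
  obtain rfl | hm := eq_or_ne m 0
  · simp only [abs_zero, reluKink_zero_left, ite_self, add_zero]
  have hroot : m * p + e = 0 ↔ p = -(e / m) := by
    rw [mul_add_eq_mul_add_div hm, mul_eq_zero_iff_left hm, add_eq_zero_iff_eq_neg]
  simp only [hroot]
  rcases eq_or_ne p (-(e / m)) with hp | hp
  · have hkink : reluKink m e t = |m| * (t - p) := by
      rw [reluKink, relu_of_nonneg (by linarith), hp, sub_neg_eq_add]
    rw [if_pos hp, if_neg hp.not_lt, if_pos hp.le, hkink]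
    ring
  · simp only [hp, if_false, add_zero, hp.le_iff_lt]

lemma relu_affine_eq_asymptote_add_kink (m e t : ℝ) :
    relu (m * t + e) =
      -relu (-m) * t + (if m < 0 then e else if m = 0 then relu e else 0) + reluKink m e t := by
  obtain rfl | hm := eq_or_ne m 0
  · simp [reluKink_zero_left, relu_zero]
  rw [mul_add_eq_mul_add_div hm, relu_mul_s2, reluKink]
  rcases hm.lt_or_gt with h | h
  · rw [if_pos h, relu_of_nonneg (by linarith)]
    field_simp
  · rw [if_neg h.not_gt, if_neg hm, relu_of_nonpos (by linarith)]
    ring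

lemma relu_add_knot {F t p m e : ℝ} (hF : p ≤ t → F = m * t + e) (a : ℝ) :
    relu (F + a * relu (t - p)) =
      relu F - (if p ≤ -(e / m) then reluKink m e t else 0) +
      (reluRightSlope (m * p + e) (m + a) - reluLeftSlope (m * p + e) m) * relu (t - p) +
      if p < -((e - a * p) / (m + a)) then reluKink (m + a) (e - a * p) t else 0 := by
  rcases le_total p t with hpt | htp
  · have hsegment : F + a * (t - p) = (m + a) * t + (e - a * p) := by rw [hF hpt]; ring
    have hvalue : (m + a) * p + (e - a * p) = m * p + e := by ring
    rw [relu_of_nonneg (sub_nonneg.2 hpt), hsegment, hF hpt,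
      relu_affine_eq_right_tangent_add_kink (m + a) (e - a * p) hpt, hvalue,
      relu_affine_eq_left_tangent_add_kink m e hpt]
    ring
  · have hold : (if p ≤ -(e / m) then reluKink m e t else 0) = 0 :=
      ite_eq_right_iff.2 fun h ↦ reluKink_of_le (htp.trans h)
    have hnew : (if p < -((e - a * p) / (m + a)) then
        reluKink (m + a) (e - a * p) t else 0) = 0 :=
      ite_eq_right_iff.2 fun h ↦ reluKink_of_le (htp.trans h.le)
    rw [relu_of_nonpos (sub_nonpos.2 htp), hold, hnew]
    ring_nf

/-- The kink of the line with slope `μ k` and offset `η k`, if it lies to the right of `X k`. -/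
noncomputable def tailKink (X : ℕ → EReal) (μ η : ℕ → ℝ) (k : ℕ) (t : ℝ) : ℝ :=
  if X k < ((-(η k / μ k) : ℝ) : EReal) then reluKink (μ k) (η k) t else 0

/-- The kink of the line with slope `μ k` and offset `η k`, if it lies between `X k` and
`X (k + 1)`. -/
noncomputable def segmentKink (X : ℕ → EReal) (μ η : ℕ → ℝ) (k : ℕ) (t : ℝ) : ℝ :=
  if X k < ((-(η k / μ k) : ℝ) : EReal) ∧ ((-(η k / μ k) : ℝ) : EReal) < X (k + 1) then
    reluKink (μ k) (η k) t else 0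

lemma sum_segmentKink {X : ℕ → EReal} {μ η : ℕ → ℝ} {n : ℕ} {S : Finset ℕ}
    (hS : ∀ ν, ν ∈ S ↔ ν ≤ n ∧ μ ν ≠ 0 ∧
      X ν < ((-(η ν / μ ν) : ℝ) : EReal) ∧ ((-(η ν / μ ν) : ℝ) : EReal) < X (ν + 1)) (t : ℝ) :
    ∑ ν ∈ Finset.range (n + 1), segmentKink X μ η ν t = ∑ ν ∈ S, reluKink (μ ν) (η ν) t := by
  have hsub : S ⊆ Finset.range (n + 1) := fun ν hν ↦
    Finset.mem_range_succ_iff.2 ((hS ν).1 hν).1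
  rw [← Finset.sum_subset hsub fun ν hν hνS ↦ ?_]
  · exact Finset.sum_congr rfl fun ν hν ↦ if_pos ((hS ν).1 hν).2.2
  · refine ite_eq_right_iff.2 fun hroot ↦ ?_
    obtain hμν | hμν := eq_or_ne (μ ν) 0
    · rw [hμν, reluKink_zero_left]
    · exact absurd ((hS ν).2 ⟨Finset.mem_range_succ_iff.1 hν, hμν, hroot⟩) hνS

lemma ite_lt_eq_add_ite_le {β M : Type*} [LinearOrder β] [AddZeroClass M] {l p : β}
    (hlp : l < p) (r : β) (y : M) :
    (if l < r then y else 0) = (if l < r ∧ r < p then y else 0) + if p ≤ r then y else 0 := by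
  rcases lt_or_ge r p with h | h
  · simp only [h, and_true, h.not_ge, if_false, add_zero]
  · simp only [hlp.trans_le h, h, h.not_gt, and_false, if_true, if_false, zero_add]

lemma sum_ite_val_lt_succ {M : Type*} [AddCommMonoid M] {n : ℕ} (g : Fin n → M) (k : Fin n) :
    (∑ i, if i.val < k.val + 1 then g i else 0) =
      (∑ i, if i.val < k.val then g i else 0) + g k := by
  have hterm (i : Fin n) : (if i.val < k.val + 1 then g i else 0) =
      (if i.val < k.val then g i else 0) + if i = k then g i else 0 := by
    grind
  simp only [hterm, Finset.sum_add_distrib, Finset.sum_ite_eq', Finset.mem_univ, if_true]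

section Truncation

variable {n : ℕ} (c b : ℝ) (α x : Fin n → ℝ)

/-- The spline with affine part `c * t + b` and knots `x i` of weight `α i`, truncated to its
first `k` knots. -/
noncomputable def truncatedSpline (k : ℕ) (t : ℝ) : ℝ :=
  c * t + b + ∑ i, if i.val < k then α i * relu (t - x i) else 0

/-- The paper's `μ_k`: the slope of the spline between its `k`-th and `k+1`-st knots, counted
from `1`. -/
noncomputable def segmentSlope (k : ℕ) : ℝ := c + ∑ i, if i.val < k then α i else 0

/-- The paper's `η_k`: the constant term of the spline between its `k`-th and `k+1`-st knots,
counted from `1`. -/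
noncomputable def segmentOffset (k : ℕ) : ℝ := b - ∑ i, if i.val < k then α i * x i else 0

lemma truncatedSpline_zero (t : ℝ) : truncatedSpline c b α x 0 t = c * t + b := by
  simp [truncatedSpline]

lemma truncatedSpline_length (t : ℝ) :
    truncatedSpline c b α x n t = c * t + b + ∑ i, α i * relu (t - x i) := by
  simp only [truncatedSpline, Fin.is_lt, if_true]

lemma truncatedSpline_succ (k : Fin n) (t : ℝ) :
    truncatedSpline c b α x (k + 1) t = truncatedSpline c b α x k t + α k * relu (t - x k) := by
  rw [truncatedSpline, sum_ite_val_lt_succ, ← add_assoc, truncatedSpline]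

lemma segmentSlope_zero : segmentSlope c α 0 = c := by
  simp [segmentSlope]

lemma segmentSlope_succ (k : Fin n) :
    segmentSlope c α (k + 1) = segmentSlope c α k + α k := by
  rw [segmentSlope, sum_ite_val_lt_succ, ← add_assoc, segmentSlope]

lemma segmentOffset_zero : segmentOffset b α x 0 = b := by
  simp [segmentOffset]

lemma segmentOffset_succ (k : Fin n) :
    segmentOffset b α x (k + 1) = segmentOffset b α x k - α k * x k := by
  rw [segmentOffset, sum_ite_val_lt_succ, ← sub_sub, segmentOffset]

variable {x}

lemma truncatedSpline_eq_segment {k : ℕ} {t : ℝ} (ht : ∀ i : Fin n, i.val < k → x i ≤ t) :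
    truncatedSpline c b α x k t = segmentSlope c α k * t + segmentOffset b α x k := by
  have hterm (i : Fin n) : (if i.val < k then α i * relu (t - x i) else 0) =
      (if i.val < k then α i else 0) * t - if i.val < k then α i * x i else 0 := by
    split_ifs with hi
    · rw [relu_of_nonneg (sub_nonneg.2 (ht i hi))]
      ring
    · ring
  simp only [truncatedSpline, segmentSlope, segmentOffset, hterm, Finset.sum_sub_distrib,
    ← Finset.sum_mul]
  ring

lemma truncatedSpline_length_apply_knot (hx : Monotone x) (k : Fin n) :
    truncatedSpline c b α x n (x k) =
      segmentSlope c α k * x k + segmentOffset b α x k := by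
  rw [← truncatedSpline_eq_segment c b α fun i hi ↦ hx (Fin.le_of_lt hi),
    truncatedSpline_length, truncatedSpline]
  congr 1
  refine Finset.sum_congr rfl fun i _ ↦ ?_
  split_ifs with hi
  · rfl
  · rw [relu_of_nonpos (sub_nonpos.2 (hx (not_lt.1 hi))), mul_zero]

lemma extendedKnot_lt {X : ℕ → EReal} (hX0 : X 0 = ⊥) (hXmid : ∀ k : Fin n, X (k + 1) = x k)
    (hx : StrictMono x) (k : Fin n) : X k < x k := by
  obtain ⟨_ | j, hj⟩ := k
  · exact hX0 ▸ EReal.bot_lt_coe _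
  · rw [hXmid ⟨j, by omega⟩]
    exact EReal.coe_lt_coe (hx (Nat.lt_succ_self j))

variable {c b α}

lemma relu_truncatedSpline_succ_sub_tailKink {X : ℕ → EReal} {μ η : ℕ → ℝ} (hx : StrictMono x)
    (hμ : μ = segmentSlope c α) (hη : η = segmentOffset b α x) (hX0 : X 0 = ⊥)
    (hXmid : ∀ k : Fin n, X (k + 1) = x k)
    (k : Fin n) (t : ℝ) :
    relu (truncatedSpline c b α x (k + 1) t) - tailKink X μ η (k + 1) t =
      relu (truncatedSpline c b α x k t) - tailKink X μ η k t +
      (reluRightSlope (μ k * x k + η k) (μ (k + 1)) - reluLeftSlope (μ k * x k + η k) (μ k)) *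
        relu (t - x k) +
      segmentKink X μ η k t := by
  have hsegment (ht : x k ≤ t) : truncatedSpline c b α x k t = μ k * t + η k := by
    rw [hμ, hη]
    exact truncatedSpline_eq_segment c b α fun i hi ↦ (hx.monotone (Fin.le_of_lt hi)).trans ht
  have hμsucc : μ (k + 1) = μ k + α k := by rw [hμ, segmentSlope_succ]
  have hηsucc : η (k + 1) = η k - α k * x k := by rw [hη, segmentOffset_succ]
  have hsplit := ite_lt_eq_add_ite_le (extendedKnot_lt hX0 hXmid hx k)
    ((-(η k / μ k) : ℝ) : EReal) (reluKink (μ k) (η k) t)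
  rw [truncatedSpline_succ, relu_add_knot hsegment, tailKink, tailKink, segmentKink, hsplit,
    hXmid, hμsucc, hηsucc]
  simp only [EReal.coe_lt_coe_iff, EReal.coe_le_coe_iff]
  ring

theorem relu_truncatedSpline_length {X : ℕ → EReal} {μ η : ℕ → ℝ} (hx : StrictMono x)
    (hμ : μ = segmentSlope c α) (hη : η = segmentOffset b α x) (hX0 : X 0 = ⊥)
    (hXmid : ∀ k : Fin n, X (k + 1) = x k) (hXtop : X (n + 1) = ⊤) (t : ℝ) :
    relu (truncatedSpline c b α x n t) =
      -relu (-c) * t + (if c < 0 then b else if c = 0 then relu b else 0) +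
      ∑ k : Fin n, (reluRightSlope (μ k * x k + η k) (μ (k + 1)) -
        reluLeftSlope (μ k * x k + η k) (μ k)) * relu (t - x k) +
      ∑ ν ∈ Finset.range (n + 1), segmentKink X μ η ν t := by
  let R (k : ℕ) : ℝ := relu (truncatedSpline c b α x k t) - tailKink X μ η k t
  have hR0 : R 0 = -relu (-c) * t + (if c < 0 then b else if c = 0 then relu b else 0) := by
    simp only [R, tailKink, hX0, EReal.bot_lt_coe, if_true, truncatedSpline_zero, hμ, hη,
      segmentSlope_zero, segmentOffset_zero]
    rw [relu_affine_eq_asymptote_add_kink, add_sub_cancel_right]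
  have hlast : segmentKink X μ η n t = tailKink X μ η n t := by
    simp only [segmentKink, tailKink, hXtop, EReal.coe_lt_top, and_true]
  have htelescope : R n - R 0 = ∑ k : Fin n, (R (k + 1) - R k) := by
    rw [Fin.sum_univ_eq_sum_range (fun k ↦ R (k + 1) - R k), Finset.sum_range_sub]
  have hincrement (k : Fin n) : R (k + 1) - R k =
      (reluRightSlope (μ k * x k + η k) (μ (k + 1)) -
        reluLeftSlope (μ k * x k + η k) (μ k)) * relu (t - x k) + segmentKink X μ η k t := by
    simp only [R, relu_truncatedSpline_succ_sub_tailKink hx hμ hη hX0 hXmid k t]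
    ring
  simp only [hincrement, Finset.sum_add_distrib] at htelescope
  rw [Fin.sum_univ_eq_sum_range (segmentKink X μ η · t)] at htelescope
  rw [Finset.sum_range_succ, hlast, ← hR0]
  linear_combination htelescope

end Truncation

lemma isCPLSpline_card {T : Finset ℝ} {q₀ q₁ : ℝ} {a g : ℝ → ℝ}
    (hg : ∀ t, g t = q₁ * t + q₀ + ∑ p ∈ T, a p * relu (t - p)) : IsCPLSpline T.card g := by
  let e := T.orderIsoOfFin rfl
  refine ⟨q₀, q₁, fun k ↦ a (e k), fun k ↦ e k, e.strictMono, fun t ↦ ?_⟩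
  rw [hg, ← Finset.sum_coe_sort, ← e.toEquiv.sum_comp]
  rfl

lemma isCPLSpline_card_image {ι : Type*} {s : Finset ι} {q₀ q₁ : ℝ} {a y : ι → ℝ} {g : ℝ → ℝ}
    (hg : ∀ t, g t = q₁ * t + q₀ + ∑ i ∈ s, a i * relu (t - y i)) :
    IsCPLSpline (s.image y).card g := by
  refine isCPLSpline_card (q₀ := q₀) (q₁ := q₁)
    (a := fun p ↦ ∑ i ∈ s with y i = p, a i) fun t ↦ ?_
  rw [hg, ← Finset.sum_fiberwise_of_maps_to fun i ↦ Finset.mem_image_of_mem y]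
  congr! 2 with p
  rw [Finset.sum_mul]
  exact Finset.sum_congr rfl fun i hi ↦ by rw [(Finset.mem_filter.1 hi).2]

lemma exists_isCPLSpline_of_eq_sum_add_sum {ι κ : Type*} {s : Finset ι} {S : Finset κ}
    {q₀ q₁ : ℝ} {a y : ι → ℝ} {a' y' : κ → ℝ} {g : ℝ → ℝ}
    (hg : ∀ t, g t = q₁ * t + q₀ + ∑ i ∈ s, a i * relu (t - y i) +
      ∑ j ∈ S, a' j * relu (t - y' j)) :
    ∃ N ≤ s.card + S.card, IsCPLSpline N g := by
  refine ⟨_, ?_, isCPLSpline_card_image (s := s.disjSum S) (a := Sum.elim a a')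
    (y := Sum.elim y y') (q₀ := q₀) (q₁ := q₁) fun t ↦ ?_⟩
  · exact Finset.card_image_le.trans_eq (Finset.card_disjSum s S)
  · simp only [hg, Finset.sum_disjSum, Sum.elim_inl, Sum.elim_inr, add_assoc]

/-- explicit CPL spline representation of `σ ∘ f` for a CPL spline `f`
with `n` knots.  Knots are indexed by `Fin n` (the Lean index `k` corresponds to the
paper's knot `x_{k+1}`), `μ k` and `η k` (for `k = 0,…,n`) are the slopes and offsets
of `f` on `(x_k, x_{k+1})`, and `X : ℕ → EReal` is the extension of the knots with
`X 0 = -∞`, `X (n+1) = +∞`. -/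
theorem relu_comp_spline (n : ℕ) (c b : ℝ) (α x : Fin n → ℝ) (hx : StrictMono x)
    (f : ℝ → ℝ) (hf : ∀ t, f t = c * t + b + ∑ k, α k * relu (t - x k))
    (μ η : ℕ → ℝ)
    (hμ : ∀ k, μ k = c + ∑ i : Fin n, if (i : ℕ) < k then α i else 0)
    (hη : ∀ k, η k = b - ∑ i : Fin n, if (i : ℕ) < k then α i * x i else 0)
    (X : ℕ → EReal)
    (hX0 : X 0 = ⊥)
    (hXmid : ∀ k : Fin n, X ((k : ℕ) + 1) = (x k : ℝ))
    (hXtop : X (n + 1) = ⊤)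
    (S : Finset ℕ)
    (hS : ∀ ν, ν ∈ S ↔ ν ≤ n ∧ μ ν ≠ 0 ∧
      X ν < ((-(η ν / μ ν) : ℝ) : EReal) ∧ ((-(η ν / μ ν) : ℝ) : EReal) < X (ν + 1)) :
    (∀ t, relu (f t) =
      (-(relu (-c))) * t
      + (if c < 0 then b else if c = 0 then relu b else 0)
      + (∑ k : Fin n, (if 0 < f (x k) then α k
          else if f (x k) = 0 then relu (μ ((k : ℕ) + 1)) + relu (-(μ (k : ℕ)))
          else 0) * relu (t - x k))
      + ∑ ν ∈ S, |μ ν| * relu (t + η ν / μ ν)) ∧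
    ∃ N, N ≤ 2 * n + 1 ∧ IsCPLSpline N (fun t => relu (f t)) := by
  obtain rfl : f = truncatedSpline c b α x n :=
    funext fun t ↦ (hf t).trans (truncatedSpline_length c b α x t).symm
  have hslope : μ = segmentSlope c α := funext hμ
  have hoffset : η = segmentOffset b α x := funext hη
  have hknot (k : Fin n) : truncatedSpline c b α x n (x k) = μ k * x k + η k := by
    rw [hslope, hoffset, truncatedSpline_length_apply_knot c b α hx.monotone]
  have hjump (k : Fin n) : μ (k + 1) - μ k = α k := by
    rw [hslope, segmentSlope_succ, add_sub_cancel_left]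
  have hformula := relu_truncatedSpline_length hx hslope hoffset hX0 hXmid hXtop
  simp only [sum_segmentKink hS, reluRightSlope_sub_reluLeftSlope, hjump, ← hknot,
    reluKink] at hformula
  refine ⟨hformula, ?_⟩
  have hcard : S.card ≤ n + 1 := by
    rw [← Finset.card_range (n + 1)]
    exact Finset.card_le_card fun ν hν ↦ Finset.mem_range_succ_iff.2 ((hS ν).1 hν).1
  simp only [← sub_neg_eq_add _ (η _ / μ _)] at hformula
  obtain ⟨N, hN, hspline⟩ := exists_isCPLSpline_of_eq_sum_add_sum hformula
  rw [Finset.card_fin] at hN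
  exact ⟨N, by omega, hspline⟩
end

section
/- Let f(t) = c·t + b + Σ_{k=1}^{n} α_k·σ(t − x_k) with strictly ordered knots x₁ < … < x_n. Then the set of points at which the composition σ∘f : ℝ → ℝ is not differentiable has at most n + 1 + ⌊(n+1)/2⌋ elements. -/
/-!
A kink of `σ ∘ f` is either a knot of `f` with `f ≥ 0` or a simple zero of `f`. A simple zero is
bounded on one side by a stretch where `f < 0`, and this stretch cannot reach the next zero of `f`
without passing a knot at which `f < 0`. If `f` has `n` knots and is negative at `m` of them, then
each of the two kinds of simple zeros (ascending, descending) therefore has at most `m + 1` members.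
Moreover any two simple zeros are separated by a knot. So the number of kinks is at most
`(n - m) + min (n + 1) (2 * (m + 1))`, and averaging the two bounds gives `3 * (n + 1) / 2`.
-/

open Set Filter Topology
open scoped Finset

section Interleaving

variable {α : Type*} [LinearOrder α]

theorem encard_le_card_add_one_of_interleaved {A : Set α} {T : Finset α}
    (h : ∀ x ∈ A, ∀ y ∈ A, x < y → ∃ z ∈ T, z ∈ Ioo x y) : A.encard ≤ (#T + 1 : ℕ) := by
  by_contra! hlt
  obtain ⟨B, hBA, hB⟩ := exists_subset_encard_eq (Order.add_one_le_of_lt hlt)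
  lift B to Finset α using finite_of_encard_eq_coe (k := #T + 1 + 1) (by simpa using hB)
  have hle : #B ≤ #T + 1 := Finset.card_le_of_interleaved fun x hx y hy hxy _ =>
    h x (hBA hx) y (hBA hy) hxy
  have heq : #B = #T + 1 + 1 := by
    rw [encard_coe_eq_coe_finsetCard] at hB
    exact_mod_cast hB
  omega

theorem exists_adjacent_of_notMem {T : Finset α} {a b s : α} (ha : a ∈ T) (hb : b ∈ T)
    (hs : s ∈ Ioo a b) (hsT : s ∉ T) :
    ∃ u ∈ T, ∃ v ∈ T, a ≤ u ∧ v ≤ b ∧ s ∈ Ioo u v ∧ Disjoint (T : Set α) (Ioo u v) := by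
  obtain ⟨u, huT, hus, hu⟩ := Finset.exists_next_left ⟨a, ha, hs.1⟩
  obtain ⟨v, hvT, hsv, hv⟩ := Finset.exists_next_right ⟨b, hb, hs.2⟩
  refine ⟨u, huT, v, hvT, hu a ha hs.1, hv b hb hs.2, ⟨hus, hsv⟩, ?_⟩
  rw [disjoint_left]
  rintro z hzT ⟨huz, hzv⟩
  rcases lt_trichotomy z s with hzs | rfl | hsz
  · exact (hu z hzT hzs).not_gt huz
  · exact hsT hzT
  · exact (hv z hzT hsz).not_gt hzv

end Interleaving

section ReluComp

variable {E : Type*} [NormedAddCommGroup E] [NormedSpace ℝ E] {f : E → ℝ} {t : E}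

theorem relu_of_nonneg_s3 {y : ℝ} (hy : 0 ≤ y) : relu y = y := max_eq_left hy

theorem relu_of_nonpos_s3 {y : ℝ} (hy : y ≤ 0) : relu y = 0 := max_eq_right hy

theorem abs_relu_le_abs (y : ℝ) : |relu y| ≤ |y| := by
  rcases le_total 0 y with hy | hy
  · rw [relu_of_nonneg_s3 hy]
  · simp [relu_of_nonpos_s3 hy]

theorem differentiableAt_relu_comp_of_neg (hf : ContinuousAt f t) (ht : f t < 0) :
    DifferentiableAt ℝ (fun s => relu (f s)) t := by
  refine (differentiableAt_const 0).congr_of_eventuallyEq ?_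
  filter_upwards [hf.eventually_lt_const ht] with s hs using relu_of_nonpos_s3 hs.le

theorem differentiableAt_relu_comp_of_pos (hf : DifferentiableAt ℝ f t) (ht : 0 < f t) :
    DifferentiableAt ℝ (fun s => relu (f s)) t := by
  refine hf.congr_of_eventuallyEq ?_
  filter_upwards [hf.continuousAt.eventually_const_lt ht] with s hs using relu_of_nonneg_s3 hs.le

theorem hasFDerivAt_relu_comp_of_eq_zero (hf : HasFDerivAt f (0 : E →L[ℝ] ℝ) t) (ht : f t = 0) :
    HasFDerivAt (fun s => relu (f s)) (0 : E →L[ℝ] ℝ) t := by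
  have hrelu : (fun s => relu (f s)) =O[𝓝 t] f :=
    .of_bound' (.of_forall fun s => abs_relu_le_abs (f s))
  have hf' : f =o[𝓝 t] fun s => s - t := by simpa [ht] using hf.isLittleO
  exact .of_isLittleO (by simpa [ht, relu_of_nonneg_s3 le_rfl] using hrelu.trans_isLittleO hf')

end ReluComp

section SimpleZeros

variable {f : ℝ → ℝ} {x y : ℝ}

/-- The simple zeros of `f`, i.e. the zeros at which `f` has a nonzero derivative. Points at which
`f` is not differentiable are excluded, since there `deriv f` is `0`. -/
def simpleZeros (f : ℝ → ℝ) : Set ℝ := {t | f t = 0 ∧ deriv f t ≠ 0}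

theorem mem_simpleZeros_of_not_differentiableAt_relu_comp (hf : DifferentiableAt ℝ f x)
    (hrelu : ¬ DifferentiableAt ℝ (fun s => relu (f s)) x) : x ∈ simpleZeros f := by
  have hzero : f x = 0 := by
    rcases lt_trichotomy (f x) 0 with hneg | hzero | hpos
    · exact absurd (differentiableAt_relu_comp_of_neg hf.continuousAt hneg) hrelu
    · exact hzero
    · exact absurd (differentiableAt_relu_comp_of_pos hf hpos) hrelu
  refine ⟨hzero, fun hderiv => hrelu ?_⟩
  have hf0 : HasFDerivAt f (0 : ℝ →L[ℝ] ℝ) x := by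
    simpa [hderiv] using hf.hasDerivAt.hasFDerivAt
  exact (hasFDerivAt_relu_comp_of_eq_zero hf0 hzero).differentiableAt

theorem exists_mem_Ioo_ne_zero_of_deriv_ne_zero (hx : deriv f x ≠ 0) (hxy : x < y) :
    ∃ s ∈ Ioo x y, f s ≠ 0 := by
  have hne : ∀ᶠ s in 𝓝[>] x, f s ≠ 0 := nhdsGT_le_nhdsNE x
    ((differentiableAt_of_deriv_ne_zero hx).hasDerivAt.eventually_ne hx)
  exact ((eventually_mem_set.mpr (Ioo_mem_nhdsGT hxy)).and hne).exists

theorem exists_mem_Ioo_neg_of_deriv_neg (hx : f x = 0) (hderiv : deriv f x < 0) (hxy : x < y) :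
    ∃ s ∈ Ioo x y, f s < 0 := by
  have hsign := nhdsWithin_le_nhds (s := Ioi x)
    (eventually_nhdsWithin_sign_eq_of_deriv_neg hderiv hx)
  obtain ⟨s, hs, hfs⟩ := ((eventually_mem_set.mpr (Ioo_mem_nhdsGT hxy)).and hsign).exists
  refine ⟨s, hs, sign_eq_neg_one_iff.mp ?_⟩
  rw [hfs, sign_neg (sub_neg.mpr hs.1)]

theorem exists_mem_Ioo_neg_of_deriv_pos (hy : f y = 0) (hderiv : 0 < deriv f y) (hxy : x < y) :
    ∃ s ∈ Ioo x y, f s < 0 := by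
  have hsign := nhdsWithin_le_nhds (s := Iio y)
    (eventually_nhdsWithin_sign_eq_of_deriv_pos hderiv hy)
  obtain ⟨s, hs, hfs⟩ := ((eventually_mem_set.mpr (Ioo_mem_nhdsLT hxy)).and hsign).exists
  refine ⟨s, hs, sign_eq_neg_one_iff.mp ?_⟩
  rw [hfs, sign_neg (sub_neg.mpr hs.2)]

end SimpleZeros

/-- Continuous piecewise affine functions on the line whose knots all lie in the finite set `S`:
`f` is affine on every bounded open interval free of points of `S`. A point of `S` need not be an
actual kink of `f`. -/
structure IsPiecewiseAffine (S : Finset ℝ) (f : ℝ → ℝ) : Prop where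
  continuous : Continuous f
  exists_eqOn_Ioo : ∀ a b : ℝ, Disjoint (S : Set ℝ) (Ioo a b) →
    ∃ m d : ℝ, EqOn f (fun t => m * t + d) (Ioo a b)

namespace IsPiecewiseAffine

variable {S : Finset ℝ} {f : ℝ → ℝ}

theorem exists_eqOn_Icc (hf : IsPiecewiseAffine S f) {a b : ℝ} (hab : a < b)
    (hS : Disjoint (S : Set ℝ) (Ioo a b)) :
    ∃ m d : ℝ, EqOn f (fun t => m * t + d) (Icc a b) := by
  obtain ⟨m, d, hmd⟩ := hf.exists_eqOn_Ioo a b hS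
  refine ⟨m, d, ?_⟩
  rw [← closure_Ioo hab.ne]
  exact hmd.closure hf.continuous (by fun_prop)

theorem differentiableAt (hf : IsPiecewiseAffine S f) {t : ℝ} (ht : t ∉ S) :
    DifferentiableAt ℝ f t := by
  have hnhds : (S : Set ℝ)ᶜ ∈ 𝓝 t := S.finite_toSet.isClosed.isOpen_compl.mem_nhds ht
  obtain ⟨a, b, htab, hab⟩ := mem_nhds_iff_exists_Ioo_subset.mp hnhds
  obtain ⟨m, d, hmd⟩ := hf.exists_eqOn_Ioo a b (subset_compl_iff_disjoint_left.mp hab)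
  have haffine : DifferentiableAt ℝ (fun s => m * s + d) t := by fun_prop
  exact haffine.congr_of_eventuallyEq (hmd.eventuallyEq_of_mem (Ioo_mem_nhds htab.1 htab.2))

theorem exists_knot_of_ne_zero (hf : IsPiecewiseAffine S f) {a b s : ℝ} (ha : f a = 0)
    (hb : f b = 0) (hs : s ∈ Ioo a b) (hfs : f s ≠ 0) : ∃ k ∈ S, k ∈ Ioo a b := by
  by_contra! hS
  have hab : a < b := hs.1.trans hs.2
  obtain ⟨m, d, hmd⟩ := hf.exists_eqOn_Icc hab (disjoint_left.mpr hS)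
  rw [hmd (left_mem_Icc.mpr hab.le)] at ha
  rw [hmd (right_mem_Icc.mpr hab.le)] at hb
  have hm : m = 0 := by
    have : m * (b - a) = 0 := by linear_combination hb - ha
    exact (mul_eq_zero.mp this).resolve_right (sub_pos.mpr hab).ne'
  apply hfs
  rw [hmd (Ioo_subset_Icc_self hs)]
  simpa [hm] using ha

theorem nonneg_of_disjoint_Ioo (hf : IsPiecewiseAffine S f) {a b s : ℝ}
    (hS : Disjoint (S : Set ℝ) (Ioo a b)) (ha : 0 ≤ f a) (hb : 0 ≤ f b) (hs : s ∈ Ioo a b) :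
    0 ≤ f s := by
  have hab : a < b := hs.1.trans hs.2
  obtain ⟨m, d, hmd⟩ := hf.exists_eqOn_Icc hab hS
  rw [hmd (left_mem_Icc.mpr hab.le)] at ha
  rw [hmd (right_mem_Icc.mpr hab.le)] at hb
  rw [hmd (Ioo_subset_Icc_self hs)]
  rcases le_total 0 m with hm | hm
  · linarith [mul_le_mul_of_nonneg_left hs.1.le hm]
  · linarith [mul_le_mul_of_nonpos_left hs.2.le hm]

theorem exists_knot_neg (hf : IsPiecewiseAffine S f) {a b s : ℝ} (ha : 0 ≤ f a) (hb : 0 ≤ f b)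
    (hs : s ∈ Ioo a b) (hfs : f s < 0) : ∃ k ∈ S.filter (f · < 0), k ∈ Ioo a b := by
  by_contra! hS
  set T : Finset ℝ := insert a (insert b S) with hT
  have hnonneg : ∀ k ∈ T, k ∈ Icc a b → 0 ≤ f k := by
    intro k hk hkab
    by_contra! hneg
    have hka : k ≠ a := by rintro rfl; exact ha.not_gt hneg
    have hkb : k ≠ b := by rintro rfl; exact hb.not_gt hneg
    have hkS : k ∈ S := by simpa [hT, hka, hkb] using hk
    exact hS k (Finset.mem_filter.mpr ⟨hkS, hneg⟩) ⟨hkab.1.lt_of_ne' hka, hkab.2.lt_of_ne hkb⟩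
  have hsT : s ∉ T := fun h => (hnonneg s h (Ioo_subset_Icc_self hs)).not_gt hfs
  obtain ⟨u, huT, v, hvT, hau, hvb, hsuv, huv⟩ :=
    exists_adjacent_of_notMem (T := T) (by simp [hT]) (by simp [hT]) hs hsT
  have hST : (S : Set ℝ) ⊆ T := by
    rw [hT, Finset.coe_subset]
    exact (Finset.subset_insert b S).trans (Finset.subset_insert a _)
  have hfu : 0 ≤ f u := hnonneg u huT ⟨hau, (hsuv.1.trans hs.2).le⟩
  have hfv : 0 ≤ f v := hnonneg v hvT ⟨(hs.1.trans hsuv.2).le, hvb⟩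
  exact (hf.nonneg_of_disjoint_Ioo (huv.mono_left hST) hfu hfv hsuv).not_gt hfs

theorem encard_simpleZeros_le_card_add_one (hf : IsPiecewiseAffine S f) :
    (simpleZeros f).encard ≤ (#S + 1 : ℕ) := by
  refine encard_le_card_add_one_of_interleaved fun x hx y hy hxy => ?_
  obtain ⟨s, hs, hfs⟩ := exists_mem_Ioo_ne_zero_of_deriv_ne_zero hx.2 hxy
  exact hf.exists_knot_of_ne_zero hx.1 hy.1 hs hfs

theorem encard_descending_zeros_le (hf : IsPiecewiseAffine S f) :
    {t | f t = 0 ∧ deriv f t < 0}.encard ≤ (#(S.filter (f · < 0)) + 1 : ℕ) := by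
  refine encard_le_card_add_one_of_interleaved fun x hx y hy hxy => ?_
  obtain ⟨s, hs, hfs⟩ := exists_mem_Ioo_neg_of_deriv_neg hx.1 hx.2 hxy
  exact hf.exists_knot_neg hx.1.ge hy.1.ge hs hfs

theorem encard_ascending_zeros_le (hf : IsPiecewiseAffine S f) :
    {t | f t = 0 ∧ 0 < deriv f t}.encard ≤ (#(S.filter (f · < 0)) + 1 : ℕ) := by
  refine encard_le_card_add_one_of_interleaved fun x hx y hy hxy => ?_
  obtain ⟨s, hs, hfs⟩ := exists_mem_Ioo_neg_of_deriv_pos hy.1 hy.2 hxy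
  exact hf.exists_knot_neg hx.1.ge hy.1.ge hs hfs

theorem encard_simpleZeros_le_two_mul (hf : IsPiecewiseAffine S f) :
    (simpleZeros f).encard ≤ (2 * (#(S.filter (f · < 0)) + 1) : ℕ) := by
  have hsplit : simpleZeros f =
      {t | f t = 0 ∧ deriv f t < 0} ∪ {t | f t = 0 ∧ 0 < deriv f t} := by
    ext t
    simp only [simpleZeros, mem_ofPred_eq, mem_union, ne_iff_lt_or_gt, and_or_left]
  rw [hsplit, two_mul, Nat.cast_add]
  exact (encard_union_le _ _).trans
    (add_le_add hf.encard_descending_zeros_le hf.encard_ascending_zeros_le)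

theorem setOf_not_differentiableAt_relu_comp_subset (hf : IsPiecewiseAffine S f) :
    {t | ¬ DifferentiableAt ℝ (fun s => relu (f s)) t} ⊆
      (S.filter (¬ f · < 0) : Set ℝ) ∪ simpleZeros f := by
  intro t ht
  by_cases htS : t ∈ S
  · refine .inl (Finset.mem_filter.mpr ⟨htS, fun hneg => ht ?_⟩)
    exact differentiableAt_relu_comp_of_neg hf.continuous.continuousAt hneg
  · exact .inr (mem_simpleZeros_of_not_differentiableAt_relu_comp (hf.differentiableAt htS) ht)

end IsPiecewiseAffine

section Spline

theorem exists_eqOn_relu_sub_Ioo {a b x : ℝ} (hx : x ∉ Ioo a b) :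
    ∃ m d : ℝ, EqOn (fun t => relu (t - x)) (fun t => m * t + d) (Ioo a b) := by
  rcases le_or_gt x a with hxa | hax
  · refine ⟨1, -x, fun t ht => ?_⟩
    simpa [sub_eq_add_neg] using relu_of_nonneg_s3 (by linarith [ht.1] : 0 ≤ t - x)
  · have hbx : b ≤ x := not_lt.mp fun hxb => hx ⟨hax, hxb⟩
    refine ⟨0, 0, fun t ht => ?_⟩
    simpa using relu_of_nonpos_s3 (by linarith [ht.2] : t - x ≤ 0)

theorem isPiecewiseAffine_spline {ι : Type*} [Fintype ι] (c b : ℝ) (α x : ι → ℝ) :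
    IsPiecewiseAffine (Finset.univ.image x) (fun t => c * t + b + ∑ k, α k * relu (t - x k)) where
  continuous := by unfold relu; fun_prop
  exists_eqOn_Ioo l r hlr := by
    have hx (k : ι) : x k ∉ Ioo l r := disjoint_left.mp hlr (by simp)
    choose m d hmd using fun k => exists_eqOn_relu_sub_Ioo (hx k)
    refine ⟨c + ∑ k, α k * m k, b + ∑ k, α k * d k, fun t ht => ?_⟩
    calc c * t + b + ∑ k, α k * relu (t - x k)
        = c * t + b + ∑ k, (α k * m k * t + α k * d k) := by
          congr 1
          exact Finset.sum_congr rfl fun k _ => by linear_combination α k * hmd k ht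
      _ = (c + ∑ k, α k * m k) * t + (b + ∑ k, α k * d k) := by
          rw [Finset.sum_add_distrib, ← Finset.sum_mul]
          ring

end Spline

theorem relu_comp_spline_nondiff_card_general {S : Finset ℝ} {f : ℝ → ℝ}
    (hf : IsPiecewiseAffine S f) :
    {t : ℝ | ¬ DifferentiableAt ℝ (fun s => relu (f s)) t}.encard
      ≤ ((#S + 1 + (#S + 1) / 2 : ℕ) : ℕ∞) := by
  set m := #(S.filter (f · < 0))
  set p := #(S.filter (¬ f · < 0))
  have hcard : m + p = #S := Finset.card_filter_add_card_filter_not _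
  have hzeros : (simpleZeros f).encard ≤ (min (#S + 1) (2 * (m + 1)) : ℕ) := by
    rw [Nat.mono_cast.map_min]
    exact le_min hf.encard_simpleZeros_le_card_add_one hf.encard_simpleZeros_le_two_mul
  calc {t : ℝ | ¬ DifferentiableAt ℝ (fun s => relu (f s)) t}.encard
      ≤ (S.filter (¬ f · < 0) : Set ℝ).encard + (simpleZeros f).encard :=
        (encard_le_encard hf.setOf_not_differentiableAt_relu_comp_subset).trans
          (encard_union_le _ _)
    _ ≤ (p : ℕ∞) + (min (#S + 1) (2 * (m + 1)) : ℕ) :=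
        add_le_add (encard_coe_eq_coe_finsetCard _).le hzeros
    _ ≤ (#S + 1 + (#S + 1) / 2 : ℕ) := by
        rw [← Nat.cast_add, Nat.cast_le]
        omega

/-- for a CPL spline `f` with `n` knots, the composition `σ ∘ f` has at most
`n + 1 + ⌊(n+1)/2⌋` points of non-differentiability. -/
theorem relu_comp_spline_nondiff_card (n : ℕ) (c b : ℝ) (α x : Fin n → ℝ)
    (hx : StrictMono x)
    (f : ℝ → ℝ) (hf : ∀ t, f t = c * t + b + ∑ k, α k * relu (t - x k)) :
    {t : ℝ | ¬ DifferentiableAt ℝ (fun s => relu (f s)) t}.encard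
      ≤ ((n + 1 + (n + 1) / 2 : ℕ) : ℕ∞) := by
  obtain rfl : f = _ := funext hf
  have hcard : #(Finset.univ.image x) ≤ n := Finset.card_image_le.trans_eq (Finset.card_fin n)
  exact (relu_comp_spline_nondiff_card_general (isPiecewiseAffine_spline c b α x)).trans
    (Nat.cast_le.mpr (by omega))
end

section
/- Every f₃ ∈ Y_{n₁,n₂} can be written in the normalized form f₃(t) = c^(3)·t + b^(3) + A^(3)·σ( A^(2)·σ(t·𝟙 − x) + s·t + b^(2) ) for all t ∈ ℝ, where A^(3) ∈ ℝ^{1×n₂}, A^(2) ∈ ℝ^{n₂×n₁}, b^(2) ∈ ℝ^{n₂}, x ∈ ℝ^{n₁} with strictly increasing entries x₁ < x₂ < … < x_{n₁}, b^(3), c^(3) ∈ ℝ, 𝟙 = (1, …, 1)ᵀ ∈ ℝ^{n₁}, and s ∈ {−1, 0, 1}^{n₂} is a sign vector; here σ is applied componentwise to vectors. -/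
/-- `f` belongs to the two-hidden-layer ReLU network class `Y_{n₁,n₂}`. -/
def IsReLU2 (n1 n2 : ℕ) (f : ℝ → ℝ) : Prop :=
  ∃ (a1 b1 : Fin n1 → ℝ) (a2 : Fin n2 → Fin n1 → ℝ) (c2 b2 a3 : Fin n2 → ℝ)
    (c3 b3 : ℝ),
    ∀ t, f t = c3 * t + b3 +
      ∑ j, a3 j * relu ((∑ k, a2 j k * relu (a1 k * t + b1 k)) + c2 j * t + b2 j)

/-!
A neuron `σ(at + b)` with `a ≠ 0` has its only kink at `-b / a`. Since `σ` is positively homogeneous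
and `σ(u) = σ(-u) + u`, it is a combination of `σ(t + b / a)` and an affine function, whatever the
sign of `a`. Hence, once `x` enumerates the kinks of the first layer, padded by arbitrary points,
every input of the second layer lies in the linear span of the `σ(t - xₖ)`, `t` and `1`. If the
coefficient of `t` in such an input is nonzero, dividing by its absolute value normalizes it to a
sign, and positive homogeneity of the outer `σ` moves the divisor into the output weights.
-/

theorem relu_mul_of_nonneg {c : ℝ} (hc : 0 ≤ c) (u : ℝ) : relu (c * u) = c * relu u := by
  rw [relu, relu, mul_max_of_nonneg _ _ hc, mul_zero]

theorem relu_eq_relu_neg_add_self (u : ℝ) : relu u = relu (-u) + u := by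
  rw [relu, relu, ← max_add_add_right, neg_add_cancel, zero_add, max_comm]

theorem exists_strictMono_subset_range {α : Type*} [LinearOrder α] [Infinite α] {n : ℕ}
    (S : Finset α) (hS : S.card ≤ n) : ∃ x : Fin n → α, StrictMono x ∧ ↑S ⊆ Set.range x := by
  obtain ⟨T, hST, hT⟩ := Infinite.exists_superset_card_eq S n hS
  refine ⟨T.orderEmbOfFin hT, (T.orderEmbOfFin hT).strictMono, ?_⟩
  rw [Finset.range_orderEmbOfFin]
  exact Finset.coe_subset.mpr hST

theorem exists_pos_mul_sign_eq (c : ℝ) :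
    ∃ r s : ℝ, 0 < r ∧ (s = -1 ∨ s = 0 ∨ s = 1) ∧ c = r * s := by
  rcases lt_trichotomy c 0 with hc | rfl | hc
  · exact ⟨-c, -1, neg_pos.mpr hc, by simp, by simp⟩
  · exact ⟨1, 0, one_pos, by simp, by simp⟩
  · exact ⟨c, 1, hc, by simp, by simp⟩

/-- The space of continuous piecewise affine functions with finitely many kinks, all at knots `x k`,
encoded as the span of the shifted ReLUs `t ↦ σ(t - x k)` and the affine functions. -/
def reluSpan {ι : Type*} (x : ι → ℝ) : Submodule ℝ (ℝ → ℝ) :=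
  Submodule.span ℝ (Set.range fun k t => relu (t - x k)) ⊔ Submodule.span ℝ {id, 1}

namespace reluSpan

variable {ι κ : Type*} {x : ι → ℝ}

theorem mem_iff [Fintype ι] {g : ℝ → ℝ} :
    g ∈ reluSpan x ↔
      ∃ (w : ι → ℝ) (c b : ℝ), ∀ t, g t = (∑ k, w k * relu (t - x k)) + c * t + b := by
  simp only [reluSpan, Submodule.mem_sup', Subtype.exists, exists_prop,
    Submodule.mem_span_range_iff_exists_fun, Submodule.mem_span_pair]
  constructor
  · rintro ⟨_, ⟨w, rfl⟩, _, ⟨c, b, rfl⟩, rfl⟩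
    exact ⟨w, c, b, fun t => by simp [add_assoc]⟩
  · rintro ⟨w, c, b, hg⟩
    exact ⟨_, ⟨w, rfl⟩, _, ⟨c, b, rfl⟩, funext fun t => by simp [hg, add_assoc]⟩

theorem affine_mem (x : ι → ℝ) (c b : ℝ) : (fun t => c * t + b) ∈ reluSpan x :=
  Submodule.mem_sup_right <| Submodule.mem_span_pair.mpr ⟨c, b, by ext; simp⟩

theorem relu_sub_mem (x : ι → ℝ) (k : ι) : (fun t => relu (t - x k)) ∈ reluSpan x :=
  Submodule.mem_sup_left <| Submodule.subset_span ⟨k, rfl⟩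

theorem relu_affine_mem {a b : ℝ} (hx : a ≠ 0 → -b / a ∈ Set.range x) :
    (fun t => relu (a * t + b)) ∈ reluSpan x := by
  rcases eq_or_ne a 0 with rfl | ha
  · simpa only [zero_mul, zero_add] using affine_mem x 0 (relu b)
  obtain ⟨k, hk⟩ := hx ha
  have factor (t : ℝ) : a * t + b = a * (t - x k) := by
    rw [hk]
    field_simp
    ring
  have scaled_mem (c : ℝ) : (fun t => c * relu (t - x k)) ∈ reluSpan x :=
    Submodule.smul_mem _ c (relu_sub_mem x k)
  rcases ha.lt_or_gt with neg | pos
  · have reflect (t : ℝ) : relu (a * t + b) = -a * relu (t - x k) + (a * t + b) := by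
      rw [relu_eq_relu_neg_add_self, ← relu_mul_of_nonneg (neg_nonneg.mpr neg.le), factor, neg_mul]
    simp only [reflect]
    exact add_mem (scaled_mem (-a)) (affine_mem x a b)
  · simpa only [factor, relu_mul_of_nonneg pos.le] using scaled_mem a

theorem sum_relu_affine_add_affine_mem [Fintype κ] {a b : κ → ℝ}
    (hx : ∀ k, a k ≠ 0 → -b k / a k ∈ Set.range x) (w : κ → ℝ) (c d : ℝ) :
    (fun t => (∑ k, w k * relu (a k * t + b k)) + c * t + d) ∈ reluSpan x := by
  have sum_mem : (∑ k, w k • fun t => relu (a k * t + b k)) ∈ reluSpan x :=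
    Submodule.sum_mem _ fun k _ => Submodule.smul_mem _ _ (relu_affine_mem (hx k))
  convert add_mem sum_mem (affine_mem x c d) using 1
  ext t
  simp [add_assoc]

theorem exists_eq_pos_mul_sign_slope [Fintype ι] {g : ℝ → ℝ} (hg : g ∈ reluSpan x) :
    ∃ (r : ℝ) (w : ι → ℝ) (s b : ℝ), 0 < r ∧ (s = -1 ∨ s = 0 ∨ s = 1) ∧
      ∀ t, g t = r * ((∑ k, w k * relu (t - x k)) + s * t + b) := by
  obtain ⟨w, c, b, hg⟩ := mem_iff.mp hg
  obtain ⟨r, s, hr, hs, rfl⟩ := exists_pos_mul_sign_eq c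
  refine ⟨r, fun k => w k / r, s, b / r, hr, hs, fun t => ?_⟩
  simp only [hg, mul_add, Finset.mul_sum, ← mul_assoc, mul_div_cancel₀ _ hr.ne']

end reluSpan

/-- every `f₃ ∈ Y_{n₁,n₂}` has a normalized representation
`f₃(t) = c³·t + b³ + A³·σ(A²·σ(t·𝟙 − x) + s·t + b²)` with strictly increasing knots `x`
and a sign vector `s ∈ {−1,0,1}^{n₂}`. -/
theorem two_layer_normalized_form (n1 n2 : ℕ) (f : ℝ → ℝ) (hf : IsReLU2 n1 n2 f) :
    ∃ (A3 : Fin n2 → ℝ) (A2 : Fin n2 → Fin n1 → ℝ) (b2 : Fin n2 → ℝ)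
      (x : Fin n1 → ℝ) (b3 c3 : ℝ) (s : Fin n2 → ℝ),
      StrictMono x ∧
      (∀ j, s j = -1 ∨ s j = 0 ∨ s j = 1) ∧
      ∀ t, f t = c3 * t + b3 +
        ∑ j, A3 j * relu ((∑ k, A2 j k * relu (t - x k)) + s j * t + b2 j) := by
  obtain ⟨a1, b1, a2, c2, b2, a3, c3, b3, hf⟩ := hf
  -- A neuron with `a1 k = 0` contributes the point `-b1 k / 0 = 0`, which only pads the knots.
  let kinks : Finset ℝ := Finset.univ.image fun k => -b1 k / a1 k
  obtain ⟨x, hx, kinks_subset⟩ : ∃ x : Fin n1 → ℝ, StrictMono x ∧ ↑kinks ⊆ Set.range x :=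
    exists_strictMono_subset_range kinks (Finset.card_image_le.trans_eq (Finset.card_fin n1))
  have kink_mem (k : Fin n1) : -b1 k / a1 k ∈ Set.range x :=
    kinks_subset (Finset.mem_image_of_mem _ (Finset.mem_univ k))
  have input_mem (j : Fin n2) :
      (fun t => (∑ k, a2 j k * relu (a1 k * t + b1 k)) + c2 j * t + b2 j) ∈ reluSpan x :=
    reluSpan.sum_relu_affine_add_affine_mem (fun k _ => kink_mem k) (a2 j) (c2 j) (b2 j)
  choose r w s b hr hs input_eq using fun j => reluSpan.exists_eq_pos_mul_sign_slope (input_mem j)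
  refine ⟨fun j => a3 j * r j, w, b, x, b3, c3, s, hx, hs, fun t => ?_⟩
  simp only [hf, input_eq, relu_mul_of_nonneg (hr _).le, mul_assoc]
end

section
/- Let f₃ ∈ Y_{n₁,n₂} with c_j^(2) = 0 for all j = 1, …, n₂ (no source channel in the second layer). If n₁ < 3 or n₂ < 2, then f₃ cannot possess (n₁+1)(n₂+1)−1 active breakpoints; that is, the set of points at which f₃ is not differentiable has fewer than (n₁+1)(n₂+1)−1 elements. -/
/-!
Each second-layer unit is `relu ∘ g` for a first-layer network `g`, which is piecewise affine with
at most `n₁` kinks. Off these kinks, `relu ∘ g` can only break at a transversal zero of `g`. Two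
such zeros are separated by a kink, so `g` has at most `n₁ + 1` of them, and if it has `n₁ + 1`,
they interlace with the kinks and the slope of `g` changes sign across each kink.

* For `n₁ ≤ 2` this is impossible, because the slope of a ReLU unit vanishes on one side of its
  kink.
* For `n₁ ≥ 2` the affine piece of `g` between the first two kinks has a zero in its interior, so
  `g` is negative at one of the two kinks, where `relu ∘ g` is then smooth; for `n₂ = 1` that kink
  is lost as a breakpoint.

Either way at most `n₁ (n₂ + 1)` breakpoints remain.
-/

open Set Topology

section Relu

variable {g : ℝ → ℝ} {t : ℝ}

theorem hasDerivAt_relu_comp_of_neg (hg : ContinuousAt g t) (ht : g t < 0) :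
    HasDerivAt (fun u => relu (g u)) 0 t := by
  have hneg : ∀ᶠ u in 𝓝 t, g u < 0 := hg.eventually_lt continuousAt_const ht
  exact (hasDerivAt_const t 0).congr_of_eventuallyEq (hneg.mono fun u hu => max_eq_right hu.le)

theorem hasDerivAt_relu_comp_of_pos {s : ℝ} (hg : HasDerivAt g s t) (ht : 0 < g t) :
    HasDerivAt (fun u => relu (g u)) s t := by
  have hpos : ∀ᶠ u in 𝓝 t, 0 < g u := continuousAt_const.eventually_lt hg.continuousAt ht
  exact hg.congr_of_eventuallyEq (hpos.mono fun u hu => max_eq_left hu.le)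

theorem norm_relu_le (x : ℝ) : ‖relu x‖ ≤ ‖x‖ := by
  rw [relu, Real.norm_of_nonneg (le_max_right x 0)]
  exact max_le (le_abs_self x) (norm_nonneg x)

theorem hasDerivAt_relu_comp_of_eq_zero (hg : HasDerivAt g 0 t) (ht : g t = 0) :
    HasDerivAt (fun u => relu (g u)) 0 t := by
  rw [hasDerivAt_iff_isLittleO] at hg ⊢
  have hrelu : relu 0 = 0 := max_self 0
  simp only [ht, hrelu, sub_zero, smul_zero] at hg ⊢
  exact (Asymptotics.isBigO_of_le _ fun u => norm_relu_le (g u)).trans_isLittleO hg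

/-- The zeros at which `g` crosses the axis with a nonzero slope; they are the places where
`relu ∘ g` acquires a breakpoint that `g` does not have. -/
def transversalZeros (g : ℝ → ℝ) : Set ℝ := {t | g t = 0 ∧ deriv g t ≠ 0}

theorem differentiableAt_of_mem_transversalZeros (ht : t ∈ transversalZeros g) :
    DifferentiableAt ℝ g t :=
  differentiableAt_of_deriv_ne_zero ht.2

theorem differentiableAt_relu_comp (hg : DifferentiableAt ℝ g t) (ht : t ∉ transversalZeros g) :
    DifferentiableAt ℝ (fun u => relu (g u)) t := by
  rcases lt_trichotomy (g t) 0 with hneg | hzero | hpos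
  · exact (hasDerivAt_relu_comp_of_neg hg.continuousAt hneg).differentiableAt
  · have hderiv : deriv g t = 0 := by_contra fun h => ht ⟨hzero, h⟩
    exact (hasDerivAt_relu_comp_of_eq_zero (hderiv ▸ hg.hasDerivAt) hzero).differentiableAt
  · exact (hasDerivAt_relu_comp_of_pos hg.hasDerivAt hpos).differentiableAt

end Relu

/-- `g` is piecewise affine with all its kinks in `T`. Affinity is required on the closure of each
open interval that avoids `T`, so that for finite `T` the pieces fit together continuously. -/
def IsPiecewiseAffine_s13 (g : ℝ → ℝ) (T : Set ℝ) : Prop :=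
  ∀ ⦃x y : ℝ⦄, Disjoint (Ioo x y) T → ∃ s d : ℝ, EqOn g (fun t => s * t + d) (Icc x y)

namespace IsPiecewiseAffine_s13

variable {g : ℝ → ℝ} {T : Set ℝ} {t u v x y r : ℝ}

theorem eq_add_deriv_mul (hg : IsPiecewiseAffine_s13 g T) (ht : DifferentiableAt ℝ g t)
    (h : Disjoint (uIoo t v) T) : g v = g t + deriv g t * (v - t) := by
  obtain ⟨s, d, hsd⟩ := hg h
  rcases eq_or_ne t v with rfl | htv
  · ring
  have hslope : deriv g t = s := by
    have huniq : UniqueDiffWithinAt ℝ (uIcc t v) t :=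
      uniqueDiffOn_Icc (inf_lt_sup.2 htv) t left_mem_uIcc
    have haffine : HasDerivWithinAt (fun w => s * w + d) s (uIcc t v) t := by
      simpa using ((hasDerivWithinAt_id t (uIcc t v)).const_mul s).add_const d
    rw [← ht.derivWithin huniq]
    exact (haffine.congr hsd (hsd left_mem_uIcc)).derivWithin huniq
  rw [hslope, hsd left_mem_uIcc, hsd right_mem_uIcc]
  ring

theorem eq_deriv_mul (hg : IsPiecewiseAffine_s13 g T) (ht : t ∈ transversalZeros g)
    (h : Disjoint (uIoo t v) T) : g v = deriv g t * (v - t) := by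
  rw [hg.eq_add_deriv_mul (differentiableAt_of_mem_transversalZeros ht) h, ht.1, zero_add]

theorem deriv_eq_deriv (hg : IsPiecewiseAffine_s13 g T) (ht : DifferentiableAt ℝ g t)
    (hu : DifferentiableAt ℝ g u) (h : Disjoint (uIoo t u) T) : deriv g t = deriv g u := by
  rcases eq_or_ne t u with rfl | htu
  · rfl
  have hforth := hg.eq_add_deriv_mul ht h
  have hback := hg.eq_add_deriv_mul hu (uIoo_comm t u ▸ h)
  exact mul_right_cancel₀ (sub_ne_zero.2 htu) (by linear_combination hforth + hback)

theorem exists_kink_mem_Ioo (hg : IsPiecewiseAffine_s13 g T) (hx : x ∈ transversalZeros g)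
    (hy : y ∈ transversalZeros g) (hxy : x < y) : ∃ r ∈ T, r ∈ Ioo x y := by
  by_contra! hT
  have hline := hg.eq_deriv_mul (v := y) hx
    (uIoo_of_lt hxy ▸ disjoint_left.2 fun r hr hrT => hT r hrT hr)
  exact mul_ne_zero hx.2 (sub_ne_zero.2 hxy.ne') (hline.symm.trans hy.1)

theorem deriv_mul_deriv_neg (hg : IsPiecewiseAffine_s13 g T) (hx : x ∈ transversalZeros g)
    (hy : y ∈ transversalZeros g) (hxr : x < r) (hry : r < y) (hleft : Disjoint (Ioo x r) T)
    (hright : Disjoint (Ioo r y) T) : deriv g x * deriv g y < 0 := by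
  have hgx := hg.eq_deriv_mul hx (uIoo_of_lt hxr ▸ hleft)
  have hgy := hg.eq_deriv_mul hy (uIoo_of_gt hry ▸ hright)
  have hcross : deriv g x * deriv g y * (y - r) = -(deriv g x ^ 2 * (r - x)) := by
    linear_combination deriv g x * (hgy - hgx)
  have hsq : 0 < deriv g x ^ 2 * (r - x) := mul_pos (sq_pos_of_ne_zero hx.2) (sub_pos.2 hxr)
  exact neg_of_mul_neg_left (hcross ▸ neg_neg_of_pos hsq) (sub_pos.2 hry).le

theorem neg_or_neg_of_mem_Ioo (hg : IsPiecewiseAffine_s13 g T) (ht : t ∈ transversalZeros g)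
    (htxy : t ∈ Ioo x y) (h : Disjoint (Ioo x y) T) : g x < 0 ∨ g y < 0 := by
  have hgx := hg.eq_deriv_mul (v := x) ht
    (h.mono_left (uIoo_of_gt htxy.1 ▸ Ioo_subset_Ioo_right htxy.2.le))
  have hgy := hg.eq_deriv_mul (v := y) ht
    (h.mono_left (uIoo_of_lt htxy.2 ▸ Ioo_subset_Ioo_left htxy.1.le))
  rcases ht.2.lt_or_gt with hneg | hpos
  · exact .inr (hgy ▸ mul_neg_of_neg_of_pos hneg (sub_pos.2 htxy.2))
  · exact .inl (hgx ▸ mul_neg_of_pos_of_neg hpos (sub_neg.2 htxy.1))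

end IsPiecewiseAffine_s13

/-- `z 0 < r 0 < z 1 < r 1 < ⋯ < r (n - 1) < z n`: the position of the kinks `r` of a network with
`n` units among its transversal zeros `z` when there are as many zeros as possible. -/
def Interlaces {α : Type*} [Preorder α] {n : ℕ} (r : Fin n → α) (z : Fin (n + 1) → α) : Prop :=
  ∀ i, r i ∈ Ioo (z i.castSucc) (z i.succ)

namespace Interlaces

section Preorder

variable {α : Type*} [Preorder α] {n : ℕ} {r : Fin n → α} {z : Fin (n + 1) → α}

theorem strictMono_outer (h : Interlaces r z) : StrictMono z :=
  Fin.strictMono_iff_lt_succ.2 fun i => (h i).1.trans (h i).2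

theorem succ_le_castSucc (h : Interlaces r z) {i j : Fin n} (hij : i < j) :
    z i.succ ≤ z j.castSucc :=
  h.strictMono_outer.monotone (Fin.succ_le_castSucc_iff.2 hij)

theorem strictMono_inner (h : Interlaces r z) : StrictMono r := fun _ _ hij =>
  ((h _).2.trans_le (h.succ_le_castSucc hij)).trans (h _).1

theorem ne (h : Interlaces r z) (i : Fin n) (j : Fin (n + 1)) : r i ≠ z j := by
  rcases j.succ_le_or_le_castSucc i with hij | hji
  · exact ((h i).2.trans_le (h.strictMono_outer.monotone hij)).ne
  · exact ((h.strictMono_outer.monotone hji).trans_lt (h i).1).ne'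

theorem eq_of_mem_Ioo (h : Interlaces r z) {i j : Fin n}
    (hj : r j ∈ Ioo (z i.castSucc) (z i.succ)) : j = i := by
  rcases lt_trichotomy j i with hlt | heq | hgt
  · exact absurd (hj.1.trans ((h j).2.trans_le (h.succ_le_castSucc hlt))) (lt_irrefl _)
  · exact heq
  · exact absurd (((h.succ_le_castSucc hgt).trans_lt (h j).1).trans hj.2) (lt_irrefl _)

end Preorder

variable {n : ℕ} {r : Fin n → ℝ} {z : Fin (n + 1) → ℝ}

theorem deriv_mul_deriv_neg {g : ℝ → ℝ} (h : Interlaces r z)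
    (hg : IsPiecewiseAffine_s13 g (range r)) (hz : ∀ j, z j ∈ transversalZeros g) (i : Fin n) :
    deriv g (z i.castSucc) * deriv g (z i.succ) < 0 := by
  refine hg.deriv_mul_deriv_neg (hz _) (hz _) (h i).1 (h i).2 ?_ ?_ <;>
    rw [disjoint_right, forall_mem_range] <;> intro j hj
  · exact hj.2.ne (congrArg r (h.eq_of_mem_Ioo ⟨hj.1, hj.2.trans (h i).2⟩))
  · exact hj.1.ne' (congrArg r (h.eq_of_mem_Ioo ⟨(h i).1.trans hj.1, hj.2⟩))

theorem exists_neg {m : ℕ} {r : Fin (m + 2) → ℝ} {z : Fin (m + 3) → ℝ} {g : ℝ → ℝ}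
    (h : Interlaces r z) (hg : IsPiecewiseAffine_s13 g (range r)) (hz : ∀ j, z j ∈ transversalZeros g) :
    ∃ i, g (r i) < 0 := by
  have hgap : Disjoint (Ioo (r 0) (r 1)) (range r) := by
    rw [disjoint_right, forall_mem_range]
    intro i hi
    have h0 := h.strictMono_inner.lt_iff_lt.1 hi.1
    have h1 := h.strictMono_inner.lt_iff_lt.1 hi.2
    simp only [Fin.lt_def, Fin.val_zero, Fin.val_one] at h0 h1
    omega
  exact (hg.neg_or_neg_of_mem_Ioo (hz 1) ⟨(h 0).2, (h 1).1⟩ hgap).elim (⟨0, ·⟩) (⟨1, ·⟩)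

end Interlaces

theorem encard_range_le_card {α ι : Type*} [Fintype ι] (ρ : ι → α) :
    (range ρ).encard ≤ Fintype.card ι := by
  rw [← image_univ, ← ENat.card_eq_coe_fintype_card, ← encard_univ]
  exact encard_image_le ρ univ

section Separated

variable {α ι : Type*} [LinearOrder α] {Z : Set α} {ρ : ι → α}

theorem exists_interlaces_of_le_encard (hsep : ∀ x ∈ Z, ∀ y ∈ Z, x < y → ∃ k, ρ k ∈ Ioo x y)
    {m : ℕ} (hm : ((m + 1 : ℕ) : ℕ∞) ≤ Z.encard) :
    ∃ (e : Fin m ↪ ι) (z : Fin (m + 1) → α), (∀ j, z j ∈ Z) ∧ Interlaces (ρ ∘ e) z := by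
  obtain ⟨F, hFZ, hF⟩ := exists_subset_encard_eq hm
  lift F to Finset α using finite_of_encard_eq_coe hF
  rw [encard_coe_eq_coe_finsetCard, Nat.cast_inj] at hF
  let z := F.orderEmbOfFin hF
  have hz (j) : z j ∈ Z := hFZ (F.orderEmbOfFin_mem hF j)
  choose e he using fun i : Fin m => hsep _ (hz _) _ (hz _) (z.strictMono i.castSucc_lt_succ)
  have hlace : Interlaces (ρ ∘ e) z := he
  exact ⟨⟨e, hlace.strictMono_inner.injective.of_comp⟩, z, hz, hlace⟩

theorem encard_le_card_add_one_of_separated [Fintype ι]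
    (hsep : ∀ x ∈ Z, ∀ y ∈ Z, x < y → ∃ k, ρ k ∈ Ioo x y) : Z.encard ≤ Fintype.card ι + 1 := by
  by_contra! hlt
  obtain ⟨e, -⟩ := exists_interlaces_of_le_encard (m := Fintype.card ι + 1) hsep
    (by push_cast; exact Order.add_one_le_of_lt hlt)
  simpa using Fintype.card_le_of_embedding e

theorem exists_equiv_interlaces_of_card_lt_encard [Fintype ι] {n : ℕ} (hn : Fintype.card ι = n)
    (hsep : ∀ x ∈ Z, ∀ y ∈ Z, x < y → ∃ k, ρ k ∈ Ioo x y) (hZ : (n : ℕ∞) < Z.encard) :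
    ∃ (e : Fin n ≃ ι) (z : Fin (n + 1) → α), (∀ j, z j ∈ Z) ∧ Interlaces (ρ ∘ e) z := by
  obtain ⟨e, z, hz, hlace⟩ := exists_interlaces_of_le_encard (m := n) hsep
    (by push_cast; exact Order.add_one_le_of_lt hZ)
  have he : Function.Bijective e :=
    (Fintype.bijective_iff_injective_and_card e).2 ⟨e.injective, by simp [hn]⟩
  exact ⟨Equiv.ofBijective e he, z, hz, hlace⟩

end Separated

section ReluUnit

/-- A unit of the first hidden layer. -/
noncomputable def reluUnit (a b t : ℝ) : ℝ := relu (a * t + b)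

/-- The breakpoint of `reluUnit a b`. For `a = 0` the unit is constant and the junk value `0` is a
harmless spurious kink. -/
noncomputable def kink (a b : ℝ) : ℝ := -b / a

variable {a b t x y : ℝ}

theorem mul_add_eq_mul_sub_kink (ha : a ≠ 0) (b t : ℝ) : a * t + b = a * (t - kink a b) := by
  rw [kink]
  field_simp
  ring

theorem hasDerivAt_mul_add (a b t : ℝ) : HasDerivAt (fun u => a * u + b) a t := by
  simpa using ((hasDerivAt_id t).const_mul a).add_const b

theorem differentiableAt_reluUnit (ht : t ≠ kink a b) : DifferentiableAt ℝ (reluUnit a b) t := by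
  refine differentiableAt_relu_comp (hasDerivAt_mul_add a b t).differentiableAt fun hmem => ?_
  have ha : a ≠ 0 := (hasDerivAt_mul_add a b t).deriv ▸ hmem.2
  exact mul_ne_zero ha (sub_ne_zero.2 ht) (mul_add_eq_mul_sub_kink ha b t ▸ hmem.1)

theorem deriv_reluUnit_eq_zero_or (hx : x < kink a b) (hy : kink a b < y) :
    deriv (reluUnit a b) x = 0 ∨ deriv (reluUnit a b) y = 0 := by
  have hflat {t : ℝ} (ht : a * t + b < 0) : deriv (reluUnit a b) t = 0 :=
    (hasDerivAt_relu_comp_of_neg (hasDerivAt_mul_add a b t).continuousAt ht).deriv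
  rcases lt_trichotomy a 0 with ha | rfl | ha
  · exact .inr (hflat (mul_add_eq_mul_sub_kink ha.ne b y ▸ mul_neg_of_neg_of_pos ha (sub_pos.2 hy)))
  · exact .inl (by unfold reluUnit; simp)
  · exact .inl
      (hflat (mul_add_eq_mul_sub_kink ha.ne' b x ▸ mul_neg_of_pos_of_neg ha (sub_neg.2 hx)))

theorem isPiecewiseAffine_reluUnit (a b : ℝ) : IsPiecewiseAffine_s13 (reluUnit a b) {kink a b} := by
  intro x y hxy
  rw [disjoint_singleton_right, mem_Ioo, not_and_or, not_lt, not_lt] at hxy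
  have hsign : (∀ t ∈ Icc x y, 0 ≤ a * t + b) ∨ ∀ t ∈ Icc x y, a * t + b ≤ 0 := by
    rcases eq_or_ne a 0 with rfl | ha
    · simpa using (le_total 0 b).imp (fun h _ _ _ => h) fun h _ _ _ => h
    simp only [mul_add_eq_mul_sub_kink ha]
    rcases ha.lt_or_gt with ha | ha <;> rcases hxy with h | h
    · exact .inr fun t ht => mul_nonpos_of_nonpos_of_nonneg ha.le (by linarith [ht.1])
    · exact .inl fun t ht => mul_nonneg_of_nonpos_of_nonpos ha.le (by linarith [ht.2])
    · exact .inl fun t ht => mul_nonneg ha.le (by linarith [ht.1])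
    · exact .inr fun t ht => mul_nonpos_of_nonneg_of_nonpos ha.le (by linarith [ht.2])
  rcases hsign with h | h
  · exact ⟨a, b, fun t ht => max_eq_left (h t ht)⟩
  · exact ⟨0, 0, fun t ht => by simpa [reluUnit, relu] using h t ht⟩

end ReluUnit

section ShallowNet

variable {ι : Type*} [Fintype ι]

/-- A network with one hidden layer and no source channel, the input of a second-layer ReLU. -/
noncomputable def shallowNet (c a b : ι → ℝ) (d t : ℝ) : ℝ :=
  ∑ k, c k * reluUnit (a k) (b k) t + d

variable {c a b : ι → ℝ} {d : ℝ} {t : ℝ}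

theorem continuous_shallowNet (c a b : ι → ℝ) (d : ℝ) : Continuous (shallowNet c a b d) := by
  unfold shallowNet reluUnit relu
  fun_prop

theorem hasDerivAt_shallowNet (ht : ∀ k, kink (a k) (b k) ≠ t) :
    HasDerivAt (shallowNet c a b d) (∑ k, c k * deriv (reluUnit (a k) (b k)) t) t :=
  (HasDerivAt.fun_sum fun k _ =>
    (differentiableAt_reluUnit (ht k).symm).hasDerivAt.const_mul (c k)).add_const d

theorem isPiecewiseAffine_shallowNet (c a b : ι → ℝ) (d : ℝ) :
    IsPiecewiseAffine_s13 (shallowNet c a b d) (range fun k => kink (a k) (b k)) := by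
  intro x y hxy
  choose s q hsq using fun k => isPiecewiseAffine_reluUnit (a k) (b k)
    (hxy.mono_right (singleton_subset_iff.2 (mem_range_self k)))
  refine ⟨∑ k, c k * s k, ∑ k, c k * q k + d, fun t ht => ?_⟩
  simp only [shallowNet, hsq _ ht, mul_add, Finset.sum_add_distrib, Finset.sum_mul, mul_assoc,
    add_assoc]

theorem exists_kink_mem_Ioo_of_mem_transversalZeros :
    ∀ x ∈ transversalZeros (shallowNet c a b d), ∀ y ∈ transversalZeros (shallowNet c a b d),
      x < y → ∃ k, kink (a k) (b k) ∈ Ioo x y := fun _ hx _ hy hxy => by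
  simpa using (isPiecewiseAffine_shallowNet c a b d).exists_kink_mem_Ioo hx hy hxy

theorem shallowNet_comp_equiv {κ : Type*} [Fintype κ] (e : κ ≃ ι) (c a b : ι → ℝ) (d : ℝ) :
    shallowNet (c ∘ e) (a ∘ e) (b ∘ e) d = shallowNet c a b d :=
  funext fun t => congrArg (· + d) (e.sum_comp fun k => c k * reluUnit (a k) (b k) t)

theorem not_interlaces_kink_one {c a b : Fin 1 → ℝ} {z : Fin 2 → ℝ}
    (hlace : Interlaces (fun k => kink (a k) (b k)) z) :
    ¬ ∀ j, z j ∈ transversalZeros (shallowNet c a b d) := by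
  intro hz
  have hslope (j) : c 0 * deriv (reluUnit (a 0) (b 0)) (z j) ≠ 0 := by
    simpa [(hasDerivAt_shallowNet (hlace.ne · j)).deriv] using (hz j).2
  rcases deriv_reluUnit_eq_zero_or (hlace 0).1 (hlace 0).2 with h | h
  · exact right_ne_zero_of_mul (hslope 0) h
  · exact right_ne_zero_of_mul (hslope 1) h

theorem not_interlaces_kink_two {c a b : Fin 2 → ℝ} {z : Fin 3 → ℝ}
    (hlace : Interlaces (fun k => kink (a k) (b k)) z) :
    ¬ ∀ j, z j ∈ transversalZeros (shallowNet c a b d) := by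
  intro hz
  let w (k : Fin 2) (j : Fin 3) : ℝ := c k * deriv (reluUnit (a k) (b k)) (z j)
  have hslope (j) : deriv (shallowNet c a b d) (z j) = w 0 j + w 1 j := by
    rw [(hasDerivAt_shallowNet (hlace.ne · j)).deriv, Fin.sum_univ_two]
  have hne (j) : w 0 j + w 1 j ≠ 0 := hslope j ▸ (hz j).2
  have halt (i : Fin 2) :
      (w 0 i.castSucc + w 1 i.castSucc) * (w 0 i.succ + w 1 i.succ) < 0 := by
    simpa only [hslope] using
      hlace.deriv_mul_deriv_neg (isPiecewiseAffine_shallowNet c a b d) hz i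
  have hflat (i : Fin 2) : w i i.castSucc = 0 ∨ w i i.succ = 0 :=
    (deriv_reluUnit_eq_zero_or (hlace i).1 (hlace i).2).imp
      (mul_eq_zero_of_right _) (mul_eq_zero_of_right _)
  have hdiff (k : Fin 2) (j : Fin 3) : DifferentiableAt ℝ (reluUnit (a k) (b k)) (z j) :=
    differentiableAt_reluUnit (hlace.ne k j).symm
  have hconst {k : Fin 2} {i j : Fin 3} (hij : i < j) (hk : kink (a k) (b k) ∉ Ioo (z i) (z j)) :
      w k i = w k j :=
    congrArg (c k * ·) <| (isPiecewiseAffine_reluUnit (a k) (b k)).deriv_eq_deriv (hdiff k i)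
      (hdiff k j)
      (by rwa [uIoo_of_lt (hlace.strictMono_outer hij), disjoint_singleton_right])
  have hfirst : w 0 1 = w 0 2 := hconst (by decide) fun h => h.1.not_gt (hlace 0).2
  have hsecond : w 1 0 = w 1 1 := hconst (by decide) fun h => h.2.not_gt (hlace 1).1
  have h01 : (w 0 0 + w 1 0) * (w 0 1 + w 1 1) < 0 := halt 0
  have h12 : (w 0 1 + w 1 1) * (w 0 2 + w 1 2) < 0 := halt 1
  have h0 : w 0 0 = 0 ∨ w 0 1 = 0 := hflat 0
  have h1 : w 1 1 = 0 ∨ w 1 2 = 0 := hflat 1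
  rcases h0 with h0 | h0 <;> rcases h1 with h1 | h1
  · exact hne 0 (by linarith)
  · have hmid : w 0 1 + w 1 1 = (w 0 0 + w 1 0) + (w 0 2 + w 1 2) := by linarith
    -- The middle slope is the sum of the outer ones, so it cannot be opposite to both.
    have hsq : (w 0 1 + w 1 1) * (w 0 1 + w 1 1) =
        (w 0 0 + w 1 0) * (w 0 1 + w 1 1) + (w 0 1 + w 1 1) * (w 0 2 + w 1 2) := by
      linear_combination (w 0 1 + w 1 1) * hmid
    linarith [mul_self_nonneg (w 0 1 + w 1 1)]
  · exact hne 1 (by linarith)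
  · exact hne 2 (by linarith)

theorem encard_transversalZeros_shallowNet_le_card (hι : Fintype.card ι < 3) (c a b : ι → ℝ)
    (d : ℝ) : (transversalZeros (shallowNet c a b d)).encard ≤ Fintype.card ι := by
  by_contra! hlt
  obtain ⟨n, hn⟩ : ∃ n, Fintype.card ι = n := ⟨_, rfl⟩
  rw [hn] at hι hlt
  obtain ⟨e, z, hz, hlace⟩ := exists_equiv_interlaces_of_card_lt_encard hn
    exists_kink_mem_Ioo_of_mem_transversalZeros hlt
  rw [← shallowNet_comp_equiv e] at hz
  interval_cases n
  · exact (hz 0).2 ((hasDerivAt_shallowNet (hlace.ne · 0)).deriv.trans (Fin.sum_univ_zero _))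
  · exact not_interlaces_kink_one hlace hz
  · exact not_interlaces_kink_two hlace hz

theorem exists_shallowNet_kink_neg (hι : 2 ≤ Fintype.card ι)
    (hZ : Fintype.card ι < (transversalZeros (shallowNet c a b d)).encard) :
    ∃ k, shallowNet c a b d (kink (a k) (b k)) < 0 := by
  obtain ⟨m, hm⟩ : ∃ m, Fintype.card ι = m + 2 := ⟨_, (Nat.sub_add_cancel hι).symm⟩
  obtain ⟨e, z, hz, hlace⟩ := exists_equiv_interlaces_of_card_lt_encard hm
    exists_kink_mem_Ioo_of_mem_transversalZeros (hm ▸ hZ)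
  have hg := isPiecewiseAffine_shallowNet c a b d
  rw [← e.surjective.range_comp] at hg
  exact (hlace.exists_neg hg hz).imp' e fun _ h => h

theorem mem_range_kink_or_mem_transversalZeros
    (ht : ¬ DifferentiableAt ℝ (fun u => relu (shallowNet c a b d u)) t) :
    t ∈ range (fun k => kink (a k) (b k)) ∨ t ∈ transversalZeros (shallowNet c a b d) := by
  by_contra! h
  have hkink (k) : kink (a k) (b k) ≠ t := fun hk => h.1 ⟨k, hk⟩
  exact ht (differentiableAt_relu_comp (hasDerivAt_shallowNet hkink).differentiableAt h.2)

theorem encard_not_differentiableAt_relu_shallowNet_le (c a b : ι → ℝ) (d : ℝ) :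
    {t | ¬ DifferentiableAt ℝ (fun u => relu (shallowNet c a b d u)) t}.encard
      ≤ 2 * Fintype.card ι := by
  classical
  set S := {t | ¬ DifferentiableAt ℝ (fun u => relu (shallowNet c a b d u)) t}
  set Z := transversalZeros (shallowNet c a b d)
  have hS {t} (ht : t ∈ S) := mem_range_kink_or_mem_transversalZeros ht
  rcases le_or_gt Z.encard (Fintype.card ι) with hZ | hZ
  · rw [two_mul]
    exact (encard_le_encard fun t => hS).trans ((encard_union_le _ _).trans
      (add_le_add (encard_range_le_card _) hZ))
  have hι : 2 ≤ Fintype.card ι := by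
    by_contra! hι
    exact hZ.not_ge (encard_transversalZeros_shallowNet_le_card (by omega) c a b d)
  obtain ⟨k₀, hk₀⟩ := exists_shallowNet_kink_neg hι hZ
  have hsub : S ⊆ range (fun k : {k // k ≠ k₀} => kink (a k) (b k)) ∪ Z := by
    intro t ht
    refine (hS ht).imp_left ?_
    rintro ⟨k, rfl⟩
    refine ⟨⟨k, ?_⟩, rfl⟩
    rintro rfl
    exact ht (hasDerivAt_relu_comp_of_neg
      (continuous_shallowNet c a b d).continuousAt hk₀).differentiableAt
  have hle := (encard_le_encard hsub).trans ((encard_union_le _ _).trans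
    (add_le_add (encard_range_le_card _)
      (encard_le_card_add_one_of_separated exists_kink_mem_Ioo_of_mem_transversalZeros)))
  refine hle.trans_eq ?_
  rw [Fintype.card_subtype_compl, Fintype.card_subtype_eq]
  norm_cast
  omega

theorem encard_iUnion_not_differentiableAt_relu_shallowNet_le {κ : Type*} [Fintype κ]
    (hι : Fintype.card ι < 3) (c : κ → ι → ℝ) (a b : ι → ℝ) (d : κ → ℝ) :
    (⋃ j, {t | ¬ DifferentiableAt ℝ (fun u => relu (shallowNet (c j) a b (d j) u)) t}).encard
      ≤ (Fintype.card ι * (Fintype.card κ + 1) : ℕ) := by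
  let Z (j : κ) : Set ℝ := transversalZeros (shallowNet (c j) a b (d j))
  have hsub : (⋃ j, {t | ¬ DifferentiableAt ℝ (fun u => relu (shallowNet (c j) a b (d j) u)) t})
      ⊆ range (fun k => kink (a k) (b k)) ∪ ⋃ j, Z j :=
    iUnion_subset fun j _ ht =>
      (mem_range_kink_or_mem_transversalZeros ht).imp_right (mem_iUnion.2 ⟨j, ·⟩)
  refine (encard_le_encard hsub).trans ((encard_union_le _ _).trans ?_)
  calc (range fun k => kink (a k) (b k)).encard + (⋃ j, Z j).encard
      ≤ Fintype.card ι + ∑ j, (Z j).encard :=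
        add_le_add (encard_range_le_card _) (encard_iUnion_le_of_fintype Z)
    _ ≤ Fintype.card ι + ∑ _j : κ, (Fintype.card ι : ℕ∞) := by
        gcongr with j
        exact encard_transversalZeros_shallowNet_le_card hι (c j) a b (d j)
    _ = (Fintype.card ι * (Fintype.card κ + 1) : ℕ) := by
        rw [Finset.sum_const, Finset.card_univ, nsmul_eq_mul]
        push_cast
        ring

end ShallowNet

theorem not_differentiableAt_subset_iUnion_relu {κ : Type*} [Fintype κ] (g : κ → ℝ → ℝ)
    (α : κ → ℝ) (c b : ℝ) :
    {t | ¬ DifferentiableAt ℝ (fun u => c * u + b + ∑ j, α j * relu (g j u)) t}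
      ⊆ ⋃ j, {t | ¬ DifferentiableAt ℝ (fun u => relu (g j u)) t} := by
  refine fun t ht => by_contra fun hmem => ?_
  have hdiff (j) : DifferentiableAt ℝ (fun u => relu (g j u)) t :=
    by_contra fun hj => hmem (mem_iUnion.2 ⟨j, hj⟩)
  exact ht ((hasDerivAt_mul_add c b t).differentiableAt.add
    (DifferentiableAt.fun_sum fun j _ => (hdiff j).const_mul (α j)))

theorem no_source_channel_few_breakpoints_general {ι κ : Type*} [Fintype ι] [Fintype κ]
    (a₁ b₁ : ι → ℝ) (a₂ : κ → ι → ℝ) (b₂ a₃ : κ → ℝ) (c₃ b₃ : ℝ) (f : ℝ → ℝ)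
    (hf : ∀ t, f t = c₃ * t + b₃ +
      ∑ j, a₃ j * relu ((∑ k, a₂ j k * relu (a₁ k * t + b₁ k)) + b₂ j))
    (h : Fintype.card ι < 3 ∨ Fintype.card κ < 2) :
    {t : ℝ | ¬ DifferentiableAt ℝ f t}.encard
      ≤ (Fintype.card ι * (Fintype.card κ + 1) : ℕ) := by
  let g (j : κ) : ℝ → ℝ := shallowNet (a₂ j) a₁ b₁ (b₂ j)
  have hfg : f = fun t => c₃ * t + b₃ + ∑ j, a₃ j * relu (g j t) := funext hf
  have hS := encard_le_encard (hfg ▸ not_differentiableAt_subset_iUnion_relu g a₃ c₃ b₃)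
  rcases h with hι | hκ
  · exact hS.trans (encard_iUnion_not_differentiableAt_relu_shallowNet_le hι a₂ a₁ b₁ b₂)
  · calc {t | ¬ DifferentiableAt ℝ f t}.encard
        ≤ ∑ j, {t | ¬ DifferentiableAt ℝ (fun u => relu (g j u)) t}.encard :=
          hS.trans (encard_iUnion_le_of_fintype _)
      _ ≤ ∑ _j : κ, ((2 * Fintype.card ι : ℕ) : ℕ∞) := by
          gcongr with j
          exact_mod_cast encard_not_differentiableAt_relu_shallowNet_le (a₂ j) a₁ b₁ (b₂ j)
      _ = (Fintype.card κ * (2 * Fintype.card ι) : ℕ) := by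
          rw [Finset.sum_const, Finset.card_univ, nsmul_eq_mul, ← Nat.cast_mul]
      _ ≤ (Fintype.card ι * (Fintype.card κ + 1) : ℕ) :=
          Nat.cast_le.2 (by nlinarith [Nat.le_of_lt_succ hκ])

/-- a two-hidden-layer ReLU network without source channel in the second
layer (`c^(2) = 0`) cannot possess `(n₁+1)(n₂+1) − 1` active breakpoints when `n₁ < 3`
or `n₂ < 2`: its set of non-differentiability points has fewer than `(n₁+1)(n₂+1) − 1`
elements. -/
theorem no_source_channel_few_breakpoints (n1 n2 : ℕ) (hn1 : 1 ≤ n1) (hn2 : 1 ≤ n2)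
    (a1 b1 : Fin n1 → ℝ) (a2 : Fin n2 → Fin n1 → ℝ) (b2 a3 : Fin n2 → ℝ) (c3 b3 : ℝ)
    (f : ℝ → ℝ)
    (hf : ∀ t, f t = c3 * t + b3 +
      ∑ j, a3 j * relu ((∑ k, a2 j k * relu (a1 k * t + b1 k)) + b2 j))
    (h : n1 < 3 ∨ n2 < 2) :
    {t : ℝ | ¬ DifferentiableAt ℝ f t}.encard
      < (((n1 + 1) * (n2 + 1) - 1 : ℕ) : ℕ∞) := by
  refine (no_source_channel_few_breakpoints_general a1 b1 a2 b2 a3 c3 b3 f hf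
    (by simpa only [Fintype.card_fin] using h)).trans_lt ?_
  rw [Fintype.card_fin, Fintype.card_fin, Nat.cast_lt, add_one_mul n1]
  omega
end
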